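/- Let q = p^h with p prime, and suppose either (r = 3 and q > 4), or (r ≥ 4 and q = p > 4), or (r ≥ 4, q = p^2 and p > 3). Then a quasi-Hermitian variety V of PG(r,q^2) is a non-singular Hermitian variety if and only if its characteristic vector v^V belongs to C_p, the F_p-code spanned by the characteristic vectors of the hyperplanes of PG(r,q^2). -/

import Mathlib

/-!
Common framework: `ProjPoint F n` is the set of points of the projective space
PG(n-1, |F|) (so PG(r, q²) corresponds to `n = r + 1` and `Fintype.card F = q ^ 2`).
Projective subspaces of projective dimension `k` are the submodules of `Fin n → F`
of `finrank` equal to `k + 1`; lines have finrank 2, planes finrank 3 and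
hyperplanes finrank `n - 1 = r`.
-/

open Module Matrix

/-- The points of the projective space PG(n-1, |F|): one-dimensional subspaces
of `F^n`. -/
def ProjPoint (F : Type) [Field F] (n : ℕ) : Type :=
  {W : Submodule F (Fin n → F) // finrank F W = 1}

/-- The set of projective points lying in a given subspace `W`. -/
def pointsIn (F : Type) [Field F] (n : ℕ) (W : Submodule F (Fin n → F)) :
    Set (ProjPoint F n) :=
  {P | P.1 ≤ W}

/-- The number of points of `V` lying in the subspace `W`. -/
noncomputable def secant (F : Type) [Field F] (n : ℕ) (V : Set (ProjPoint F n))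
    (W : Submodule F (Fin n → F)) : ℕ :=
  (V ∩ pointsIn F n W).ncard

/-- The characteristic vector of a set of projective points, with values in `F_p`. -/
noncomputable def charVec (F : Type) [Field F] (p n : ℕ) (S : Set (ProjPoint F n)) :
    ProjPoint F n → ZMod p :=
  Set.indicator S 1

/-- `C_p`: the `F_p`-code spanned by the characteristic vectors of hyperplanes. -/
def hypCode (F : Type) [Field F] (p n : ℕ) :
    Submodule (ZMod p) (ProjPoint F n → ZMod p) :=
  Submodule.span (ZMod p)
    {v | ∃ H : Submodule F (Fin n → F), finrank F H = n - 1 ∧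
      v = charVec F p n (pointsIn F n H)}

/-- A quasi-Hermitian variety of PG(r, q²): it has the size of a non-singular
Hermitian variety and the same two intersection numbers with hyperplanes.
(All identities are stated multiplied through by `q² - 1`.) -/
def IsQuasiHermitian (F : Type) [Field F] (q r : ℕ)
    (V : Set (ProjPoint F (r + 1))) : Prop :=
  (V.ncard : ℤ) * ((q : ℤ) ^ 2 - 1)
      = ((q : ℤ) ^ (r + 1) + (-1) ^ r) * ((q : ℤ) ^ r - (-1) ^ r) ∧
  ∀ H : Submodule F (Fin (r + 1) → F), finrank F H = r →
    ((secant F (r + 1) V H : ℤ) * ((q : ℤ) ^ 2 - 1)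
        = ((q : ℤ) ^ r + (-1) ^ (r - 1)) * ((q : ℤ) ^ (r - 1) - (-1) ^ (r - 1)) ∨
     (secant F (r + 1) V H : ℤ) * ((q : ℤ) ^ 2 - 1)
        = ((q : ℤ) ^ 2 - 1)
          + (q : ℤ) ^ 2 * (((q : ℤ) ^ (r - 1) + (-1) ^ r) * ((q : ℤ) ^ (r - 2) - (-1) ^ r)))

/-- The zero set, in PG(n-1,|F|), of the Hermitian form `x ↦ xᵀ A x^(q)`. -/
def hermSet (F : Type) [Field F] (q n : ℕ) (A : Matrix (Fin n) (Fin n) F) :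
    Set (ProjPoint F n) :=
  {P | ∀ x ∈ P.1, ∑ i, ∑ j, x i * A i j * (x j) ^ q = 0}

/-- A non-singular Hermitian variety of PG(n-1, q²). -/
def IsNonsingHermitian (F : Type) [Field F] (q n : ℕ)
    (V : Set (ProjPoint F n)) : Prop :=
  ∃ A : Matrix (Fin n) (Fin n) F, IsUnit A.det ∧
    Aᵀ = A.map (fun a => a ^ q) ∧ V = hermSet F q n A

/-- A singular Hermitian variety of PG(n-1, q²) whose singular space (the radical
of the Hermitian form) has projective dimension `d`. -/
def IsSingularHermitian (F : Type) [Field F] (q n d : ℕ)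
    (S : Set (ProjPoint F n)) : Prop :=
  ∃ A : Matrix (Fin n) (Fin n) F,
    Aᵀ = A.map (fun a => a ^ q) ∧
    finrank F (LinearMap.ker (Matrix.toLin' Aᵀ)) = d + 1 ∧
    S = hermSet F q n A

/-- A `d`-singular quasi-Hermitian variety of PG(r, q²). -/
def IsSingularQuasiHermitian (F : Type) [Field F] (q r d : ℕ)
    (S : Set (ProjPoint F (r + 1))) : Prop :=
  ∃ S₀ : Set (ProjPoint F (r + 1)), IsSingularHermitian F q (r + 1) d S₀ ∧
    S.ncard = S₀.ncard ∧
    ∀ H : Submodule F (Fin (r + 1) → F), finrank F H = r →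
      ∃ H₀ : Submodule F (Fin (r + 1) → F), finrank F H₀ = r ∧
        secant F (r + 1) S H = secant F (r + 1) S₀ H₀

/-- `U` is a classical unital (Hermitian curve) of the plane `π` of PG(n-1, q²):
in some coordinatization `e` of `π`, it is the zero set of a non-degenerate
Hermitian form on `F³`. -/
def IsClassicalUnital (F : Type) [Field F] (q n : ℕ)
    (π : Submodule F (Fin n → F)) (U : Set (ProjPoint F n)) : Prop :=
  ∃ e : (Fin 3 → F) →ₗ[F] (Fin n → F), LinearMap.ker e = ⊥ ∧ LinearMap.range e = π ∧
    ∃ A : Matrix (Fin 3) (Fin 3) F, IsUnit A.det ∧ Aᵀ = A.map (fun a => a ^ q) ∧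
      U = {P | ∃ y : Fin 3 → F, y ≠ 0 ∧ P.1 = Submodule.span F {e y} ∧
        ∑ i, ∑ j, y i * A i j * (y j) ^ q = 0}

/-!
Let `A` be the cone of vectors lying on the points of the variety. A word of the code, restricted
to the lines with a fixed direction, has power moments that are polynomials of low degree in the
base point, so Hankel determinants of these moments bound how much its weight can drop from one
line to a parallel one. Applied to `A` and to its symmetric differences with hyperplanes, this
excludes most lines that are too long, and the second moments of the intersection numbers, known
from the two hyperplane characters, then force every line through a point off `A` to meet `A` in
`1` or `q + 1` points.

Fix such a point `x`. The moments of `A` along the lines with direction `x` are power forms of low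
degree that vanish so often that Schwartz-Zippel makes them zero, once the sum of the parameters,
which is a linear form, has been moved to `0`. The `q + 1` parameters on a long line therefore
satisfy a quadrature rule, and they also do so after a projective change of coordinate. The two
rules together make them a fibre of the norm `z ↦ z ^ (q + 1)`. Hence `A` is the zero set of a
combination of `(q + 1)`-st powers of linear forms with values fixed by `z ↦ z ^ q`, that is, of a
Hermitian form, which is non-degenerate because a vector in its radical would be a period of `A`.

Conversely, for a Hermitian form `B` the polynomial `B v v ^ (q - 1)` is the diagonal of a product
of powers of linear forms of total degree `q ^ 2 - 1`, and all such products lie in the code.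
-/

section DetDivisibility

open Finset Polynomial

variable {K : Type*} [Field K]

lemma prod_dvd_det_of_forall_dvd {R n : Type*} [CommRing R] [Fintype n] [DecidableEq n]
    {M : Matrix n n R} {f : n → R} (hf : ∀ i j, f j ∣ M i j) : ∏ j, f j ∣ M.det := by
  rw [det_apply]
  refine dvd_sum fun σ _ => ?_
  rw [Units.smul_def, zsmul_eq_mul]
  exact (prod_dvd_prod_of_dvd _ _ fun j _ => hf _ _).mul_left _

lemma exists_basis_forall_mem_of_le_finrank {ι V : Type*} [AddCommGroup V] [Module K V]
    [Finite ι] (b₀ : Basis ι K V) (W : Submodule K V) :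
    ∃ (b : Basis ι K V) (s : Finset ι), #s = finrank K W ∧ ∀ j ∈ s, b j ∈ W := by
  classical
  have := Fintype.ofFinite ι
  have : FiniteDimensional K V := b₀.finiteDimensional_of_finite
  obtain ⟨W', hW'⟩ := W.exists_isCompl
  let b := ((finBasis K W).prod (finBasis K W')).map (W.prodEquivOfIsCompl W' hW')
  have hb : ∀ j, b (Sum.inl j) ∈ W := fun j => by simp [b]
  refine ⟨b.reindex (b.indexEquiv b₀), univ.map
    (Function.Embedding.inl.trans (b.indexEquiv b₀).toEmbedding), by simp, fun j hj => ?_⟩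
  obtain ⟨l, -, rfl⟩ := mem_map.1 hj
  simpa using hb l

lemma X_sub_C_pow_dvd_det {n : Type*} [Fintype n] [DecidableEq n] (M : Matrix n n K[X]) (m : K) :
    (X - C m) ^ (Fintype.card n - (M.map (eval m)).rank) ∣ M.det := by
  set W := LinearMap.ker (M.map (eval m)).mulVecLin
  obtain ⟨b, s, hs, hbs⟩ := exists_basis_forall_mem_of_le_finrank (Pi.basisFun K n) W
  let U : Matrix n n K := (Pi.basisFun K n).toMatrix b
  have hU : IsUnit (U.map C).det := by
    rw [← RingHom.mapMatrix_apply, ← RingHom.map_det]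
    have : IsUnit U := IsUnit.of_mul_eq_one _ ((Pi.basisFun K n).toMatrix_mul_toMatrix_flip b)
    exact ((isUnit_iff_isUnit_det U).1 this).map C
  have hcol : ∀ i j, (if j ∈ s then X - C m else 1) ∣ (M * U.map C) i j := by
    intro i j
    split_ifs with hj
    · have hker : ∑ l, (M i l).eval m * b j l = 0 := congrFun (hbs j hj) i
      rw [dvd_iff_isRoot, IsRoot.def, mul_apply, eval_finsetSum, ← hker]
      exact sum_congr rfl fun l _ => by simp [U, Basis.toMatrix_apply]
    · exact one_dvd _
  have hrank : Fintype.card n - (M.map (eval m)).rank = #s := by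
    have : (M.map (eval m)).rank + finrank K W = Fintype.card n := by
      rw [rank, LinearMap.finrank_range_add_finrank_ker, finrank_fintype_fun_eq_card]
    omega
  have := prod_dvd_det_of_forall_dvd hcol
  rwa [det_mul, hU.dvd_mul_right, prod_ite_mem, univ_inter, prod_const, ← hrank] at this

lemma sum_card_sub_rank_le_natDegree_det [Fintype K] {n : Type*} [Fintype n] [DecidableEq n]
    {M : Matrix n n K[X]} (hM : M.det ≠ 0) :
    ∑ m, (Fintype.card n - (M.map (eval m)).rank) ≤ M.det.natDegree := by
  classical
  calc ∑ m, (Fintype.card n - (M.map (eval m)).rank) ≤ ∑ m, M.det.roots.count m := by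
        refine sum_le_sum fun m _ => ?_
        rw [count_roots]
        exact (le_rootMultiplicity_iff hM).2 (X_sub_C_pow_dvd_det M m)
    _ = M.det.roots.card := Multiset.sum_count_eq_card (by simp)
    _ ≤ M.det.natDegree := card_roots' _

lemma natDegree_det_hankel_le {P : ℕ → K[X]} (hP : ∀ k, (P k).natDegree ≤ k) (d : ℕ) :
    (of fun i j : Fin d => P (i + j)).det.natDegree ≤ d * (d - 1) := by
  rw [det_apply]
  refine natDegree_sum_le_of_forall_le _ _ fun σ _ => ?_
  calc (Equiv.Perm.sign σ • ∏ i, P (σ i + i)).natDegree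
      ≤ ∑ i : Fin d, ((σ i : ℕ) + i) :=
        (natDegree_smul_le _ _).trans <| (natDegree_prod_le _ _).trans <|
          sum_le_sum fun i _ => hP _
    _ = ∑ i : Fin d, (i : ℕ) + ∑ i : Fin d, (i : ℕ) := by
        rw [sum_add_distrib, Equiv.sum_comp σ (fun i : Fin d => (i : ℕ))]
    _ = d * (d - 1) := by
        rw [Fin.sum_univ_eq_sum_range (fun i => i) d, ← sum_range_id_mul_two]
        ring

end DetDivisibility

section MomentHankel

open Finset Polynomial
open scoped Classical

variable {K : Type*} [Field K] [Fintype K]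

/-- The `d × d` Hankel matrix `(∑ z, g z * z ^ (i + j))` of the power moments of a function `g` on
a finite field; its rank detects the size of the support of `g`. -/
noncomputable def momentHankel (d : ℕ) (g : K → K) : Matrix (Fin d) (Fin d) K :=
  of fun i j => ∑ z, g z * z ^ (i + j : ℕ)

lemma momentHankel_eq_mul (d : ℕ) {g : K → K} {ι : Type*} [Fintype ι]
    [DecidableEq ι] (e : ι ≃ {z // g z ≠ 0}) :
    momentHankel d g = (of fun l (i : Fin d) => (e l : K) ^ (i : ℕ))ᵀ *
      (diagonal (fun l => g (e l)) * of fun l (i : Fin d) => (e l : K) ^ (i : ℕ)) := by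
  ext i j
  simp only [momentHankel, mul_apply (M := _ᵀ), diagonal_mul, of_apply, transpose_apply]
  rw [← sum_filter_of_ne (p := fun z => g z ≠ 0) fun z _ h hz => h (by rw [hz, zero_mul]),
    ← sum_subtype_eq_sum_filter, subtype_univ, ← Equiv.sum_comp e]
  exact sum_congr rfl fun l _ => by rw [pow_add]; ring

lemma rank_momentHankel_le (d : ℕ) (g : K → K) : (momentHankel d g).rank ≤ #{z | g z ≠ 0} := by
  rw [momentHankel_eq_mul d (Equiv.refl _), ← Fintype.card_subtype]
  exact (rank_mul_le_left _ _).trans (rank_le_card_width _)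

lemma det_momentHankel_ne_zero {d : ℕ} {g : K → K} (hd : #{z | g z ≠ 0} = d) :
    (momentHankel d g).det ≠ 0 := by
  rw [← Fintype.card_subtype] at hd
  let e := (Fintype.equivFinOfCardEq hd).symm
  have hvan : (vandermonde fun i => (e i : K)).det ≠ 0 :=
    det_vandermonde_ne_zero_iff.2 (Subtype.val_injective.comp e.injective)
  rw [momentHankel_eq_mul d e, det_mul, det_mul, det_transpose, det_diagonal]
  exact mul_ne_zero hvan (mul_ne_zero (prod_ne_zero_iff.2 fun i _ => (e i).2) hvan)

lemma sum_card_support_sub_le {P : ℕ → K[X]} (hP : ∀ k, (P k).natDegree ≤ k) {g : K → K → K}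
    (hg : ∀ k m, (P k).eval m = ∑ z, g m z * z ^ k) (m₀ : K) :
    ∑ m, (#{z | g m₀ z ≠ 0} - #{z | g m z ≠ 0}) ≤
      #{z | g m₀ z ≠ 0} * (#{z | g m₀ z ≠ 0} - 1) := by
  set d := #{z | g m₀ z ≠ 0} with hd
  let M : Matrix (Fin d) (Fin d) K[X] := of fun i j => P (i + j)
  have heval : ∀ m, M.map (eval m) = momentHankel d (g m) := fun m => by
    ext i j
    exact hg _ _
  have hdet : M.det ≠ 0 := fun h0 => det_momentHankel_ne_zero hd.symm <| by
    have := congrArg (evalRingHom m₀) h0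
    rwa [RingHom.map_det, RingHom.mapMatrix_apply, map_zero, coe_evalRingHom, heval] at this
  calc ∑ m, (d - #{z | g m z ≠ 0}) ≤ ∑ m, (Fintype.card (Fin d) - (M.map (eval m)).rank) :=
        sum_le_sum fun m _ => by
          rw [Fintype.card_fin, heval]
          exact Nat.sub_le_sub_left (rank_momentHankel_le _ _) _
    _ ≤ M.det.natDegree := sum_card_sub_rank_le_natDegree_det hdet
    _ ≤ d * (d - 1) := natDegree_det_hankel_le hP d

end MomentHankel

section KernelCode

open Finset Polynomial
open scoped Classical

/-- The code of length `E` spanned by the indicator functions of the kernels of all linear forms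
(the zero form included): the lift of the code of hyperplanes to vectors. -/
noncomputable def kernelCode (K E : Type*) [Field K] [AddCommGroup E] [Module K E] :
    Submodule K (E → K) :=
  Submodule.span K (Set.range fun (L : Dual K E) v => if L v = 0 then 1 else 0)

variable {K E : Type*} [Field K] [AddCommGroup E] [Module K E]

lemma ite_ker_mem_kernelCode (L : Dual K E) :
    (fun v => if L v = 0 then (1 : K) else 0) ∈ kernelCode K E :=
  Submodule.subset_span ⟨L, rfl⟩

variable [Fintype K]

lemma one_sub_pow_card_sub_one (x : K) :
    1 - x ^ (Fintype.card K - 1) = if x = 0 then 1 else 0 := by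
  have := Fintype.one_lt_card (α := K)
  split_ifs with h
  · rw [h, zero_pow (by omega), sub_zero]
  · rw [FiniteField.pow_card_sub_one_eq_one x h, sub_self]

lemma sum_ite_affine_eq_zero_mul_pow {γ : K} (hγ : γ ≠ 0) (a : K) (k : ℕ) :
    ∑ z : K, (if a + z * γ = 0 then 1 else 0) * z ^ k = (-γ⁻¹ * a) ^ k := by
  have h : ∀ z, a + z * γ = 0 ↔ z = -γ⁻¹ * a := fun z => by
    rw [neg_mul, eq_neg_iff_add_eq_zero, eq_comm, ← mul_right_inj' hγ]
    field_simp
    rw [mul_zero, eq_comm, add_comm, mul_comm]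
  simp [h]

lemma exists_polynomial_eval_eq_sum_ite (α β γ : K) (k : ℕ) : ∃ P : K[X], P.natDegree ≤ k ∧
    ∀ m, P.eval m = ∑ z : K, (if α + m * β + z * γ = 0 then 1 else 0) * z ^ k := by
  have hlin : (C α + X * C β : K[X]).natDegree ≤ 1 := by compute_degree
  by_cases hγ : γ = 0
  · simp only [hγ, mul_zero, add_zero, ← mul_sum]
    rcases lt_or_ge k (Fintype.card K - 1) with hk | hk
    · exact ⟨0, by simp, by simp [FiniteField.sum_pow_lt_card_sub_one K k hk]⟩
    · refine ⟨(1 - (C α + X * C β) ^ (Fintype.card K - 1)) * C (∑ z : K, z ^ k), ?_, fun m => ?_⟩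
      · refine (natDegree_mul_C_le _ _).trans <| (natDegree_sub_le _ _).trans ?_
        rw [natDegree_one, zero_max]
        exact (natDegree_pow_le_of_le _ hlin).trans (by omega)
      · rw [← one_sub_pow_card_sub_one]
        simp only [eval_mul, eval_sub, eval_one, eval_pow, eval_add, eval_C, eval_X]
  · refine ⟨(C (-γ⁻¹) * (C α + X * C β)) ^ k, ?_, fun m => ?_⟩
    · exact (natDegree_pow_le_of_le k ((natDegree_C_mul_le _ _).trans hlin)).trans (mul_one k).le
    · simp only [sum_ite_affine_eq_zero_mul_pow hγ, eval_pow, eval_mul, eval_add, eval_C, eval_X]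

lemma exists_polynomial_eval_eq_sum_mul_pow {c : E → K} (hc : c ∈ kernelCode K E)
    (y₀ y₁ x : E) (k : ℕ) : ∃ P : K[X], P.natDegree ≤ k ∧
      ∀ m, P.eval m = ∑ z : K, c (y₀ + m • y₁ + z • x) * z ^ k := by
  induction hc using Submodule.span_induction with
  | mem c h =>
    obtain ⟨L, rfl⟩ := h
    simpa using exists_polynomial_eval_eq_sum_ite (L y₀) (L y₁) (L x) k
  | zero => exact ⟨0, by simp, by simp⟩
  | add c d _ _ hc hd =>
    obtain ⟨P, hP, hPc⟩ := hc
    obtain ⟨R, hR, hRd⟩ := hd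
    exact ⟨P + R, (natDegree_add_le _ _).trans (max_le hP hR), fun m => by
      simp [hPc, hRd, add_mul, sum_add_distrib]⟩
  | smul a c _ hc =>
    obtain ⟨P, hP, hPc⟩ := hc
    exact ⟨C a * P, (natDegree_C_mul_le _ _).trans hP, fun m => by
      simp [hPc, mul_sum, mul_assoc]⟩

/-- The determinant of the Hankel matrix of the moments of `z ↦ c (y₀ + m • y₁ + z • x)` is a
polynomial in `m`, nonzero at `m₀`, whose order of vanishing at `m` is at least the drop in the
number of nonzero values. -/
theorem sum_card_ne_zero_sub_le {c : E → K} (hc : c ∈ kernelCode K E) (y₀ y₁ x : E) (m₀ : K) :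
    ∑ m : K, (#{z : K | c (y₀ + m₀ • y₁ + z • x) ≠ 0} - #{z : K | c (y₀ + m • y₁ + z • x) ≠ 0}) ≤
      #{z : K | c (y₀ + m₀ • y₁ + z • x) ≠ 0} *
        (#{z : K | c (y₀ + m₀ • y₁ + z • x) ≠ 0} - 1) := by
  choose P hP hPc using exists_polynomial_eval_eq_sum_mul_pow hc y₀ y₁ x
  exact sum_card_support_sub_le hP hPc m₀

end KernelCode

section FormBias

open Finset
open scoped Classical

variable {F E ι : Type*} [Field F] [AddCommGroup E] [Module F E]

/-- The bias of the linear form `L` on a finite family of vectors. If the family is invariant under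
nonzero scalars, this is the Fourier coefficient `∑ i ∈ s, ψ (L (f i))` for any nontrivial additive
character `ψ`, and it determines the number of members lying in the hyperplane `ker L`. -/
noncomputable def formBias (s : Finset ι) (f : ι → E) (L : Dual F E) : ℤ :=
  #{i ∈ s | L (f i) = 0} - #{i ∈ s | L (f i) = 1}

lemma formBias_zero (A : Finset E) : formBias A id (0 : Dual F E) = #A := by
  simp [formBias]

lemma card_filter_eq_zero_eq_card_filter_eq_one [Fintype E] {L : Dual F E} (hL : L ≠ 0) :
    #{v | L v = 0} = #{v | L v = 1} := by
  have hsurj := LinearMap.surjective hL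
  exact AddMonoidHom.card_fiber_eq_of_mem_range L.toAddMonoidHom (hsurj 0) (hsurj 1)

lemma sum_formBias_dualAnnihilator (s : Finset ι) (f : ι → E) (W : Submodule F E)
    [Fintype W.dualAnnihilator] :
    ∑ L : W.dualAnnihilator, formBias s f L.1 =
      Fintype.card W.dualAnnihilator * #{i ∈ s | f i ∈ W} := by
  have hswap : ∀ c : F, ∑ L : W.dualAnnihilator, #{i ∈ s | L.1 (f i) = c} =
      ∑ i ∈ s, #{L : W.dualAnnihilator | L.1 (f i) = c} := fun c => by
    simp only [card_filter]
    exact sum_comm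
  have hterm : ∀ v, (#{L : W.dualAnnihilator | L.1 v = 0} : ℤ) -
      #{L : W.dualAnnihilator | L.1 v = 1} =
        if v ∈ W then (Fintype.card W.dualAnnihilator : ℤ) else 0 := by
    intro v
    have hmem : v ∈ W ↔ ∀ L : W.dualAnnihilator, L.1 v = 0 := by
      rw [← Subspace.forall_mem_dualAnnihilator_apply_eq_zero_iff, Subtype.forall]
    split_ifs with hv
    · simp [hmem.1 hv]
    · rw [hmem, not_forall] at hv
      obtain ⟨L, hL⟩ := hv
      have hne : (Dual.eval F E v).comp W.dualAnnihilator.subtype ≠ 0 := fun h0 =>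
        hL (LinearMap.congr_fun h0 L)
      rw [sub_eq_zero, Nat.cast_inj]
      exact card_filter_eq_zero_eq_card_filter_eq_one (E := W.dualAnnihilator) hne
  simp only [formBias, sum_sub_distrib]
  rw [← Nat.cast_sum, ← Nat.cast_sum, hswap, hswap]
  push_cast
  rw [← sum_sub_distrib, sum_congr rfl fun i _ => hterm _, ← sum_filter, sum_const, nsmul_eq_mul,
    mul_comm]

lemma card_filter_eq_of_ne_zero {A : Finset E} (hA : ∀ (c : F), ∀ v ∈ A, c • v ∈ A)
    (L : Dual F E) {c : F} (hc : c ≠ 0) : #{v ∈ A | L v = c} = #{v ∈ A | L v = 1} := by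
  refine card_nbij' (c⁻¹ • ·) (c • ·) ?_ ?_ ?_ ?_
  · intro v hv
    simp only [coe_filter, Set.mem_ofPred_eq] at hv ⊢
    exact ⟨hA _ _ hv.1, by simp [hv.2, hc]⟩
  · intro v hv
    simp only [coe_filter, Set.mem_ofPred_eq] at hv ⊢
    exact ⟨hA _ _ hv.1, by simp [hv.2]⟩
  · intro v _
    simp [smul_smul, hc]
  · intro v _
    simp [smul_smul, hc]

lemma card_filter_sub_eq [Fintype F] (A : Finset E) (L : Dual F E) (c : F) :
    #{w ∈ A ×ˢ A | L (w.1 - w.2) = c} =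
      ∑ t, #{v ∈ A | L v = t + c} * #{v ∈ A | L v = t} := by
  rw [card_eq_sum_card_fiberwise (f := fun w => L w.2) (t := univ) (by simp)]
  refine sum_congr rfl fun t _ => ?_
  rw [← card_product]
  congr 1
  ext ⟨u, v⟩
  simp only [mem_filter, mem_product, map_sub, sub_eq_iff_eq_add']
  constructor
  · rintro ⟨⟨⟨hu, hv⟩, huv⟩, rfl⟩
    exact ⟨⟨hu, huv⟩, hv, rfl⟩
  · rintro ⟨⟨hu, huv⟩, hv, rfl⟩
    exact ⟨⟨⟨hu, hv⟩, huv⟩, rfl⟩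

lemma formBias_sq [Finite F] {A : Finset E} (hA : ∀ (c : F), ∀ v ∈ A, c • v ∈ A) (L : Dual F E) :
    formBias A id L ^ 2 = formBias (A ×ˢ A) (fun w => w.1 - w.2) L := by
  have := Fintype.ofFinite F
  let n : F → ℤ := fun t => #{v ∈ A | L v = t}
  have hn : ∀ t, t ≠ 0 → n t = n 1 := fun t ht =>
    congrArg (Nat.cast (R := ℤ)) (card_filter_eq_of_ne_zero hA L ht)
  have hdiff : formBias (A ×ˢ A) (fun w => w.1 - w.2) L = ∑ t, (n t - n (t + 1)) * n t := by
    simp only [formBias, card_filter_sub_eq, add_zero]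
    push_cast
    rw [← sum_sub_distrib]
    exact sum_congr rfl fun t _ => by ring
  have hzero : ∀ t, t ∉ ({0, -1} : Finset F) → (n t - n (t + 1)) * n t = 0 := by
    intro t ht
    rw [mem_insert, mem_singleton, not_or] at ht
    rw [hn t ht.1, hn (t + 1) fun h => ht.2 (eq_neg_of_add_eq_zero_left h), sub_self, zero_mul]
  rw [hdiff, ← sum_subset (subset_univ {0, -1}) fun t _ ht => hzero t ht,
    sum_pair (by simp), zero_add, neg_add_cancel, hn (-1) (by simp)]
  simp only [formBias, id]
  ring

end FormBias

section CosetCount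

open Finset
open scoped Classical

variable {F E : Type*} [Field F] [AddCommGroup E] [Module F E]

/-- The number of elements of `A` in the coset `w + W`. -/
noncomputable def cosetCount (A : Finset E) (W : Submodule F E) (w : E) : ℕ :=
  #{a ∈ A | a - w ∈ W}

lemma card_filter_add_mem_eq_cosetCount {J : Type*} [AddCommGroup J] [Module F J] [Fintype J]
    {φ : J →ₗ[F] E} (hφ : Function.Injective φ) (A : Finset E) (w : E) :
    #{j | w + φ j ∈ A} = cosetCount A (LinearMap.range φ) w := by
  refine card_nbij (w + φ ·) ?_ ?_ ?_
  · intro j hj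
    simpa using hj
  · intro i _ j _ hij
    exact hφ (add_left_cancel hij)
  · intro a ha
    simp only [coe_filter, Set.mem_ofPred_eq, LinearMap.mem_range] at ha
    obtain ⟨haA, j, hj⟩ := ha
    exact ⟨j, by simpa [hj] using haA, by simp [hj]⟩

variable [Fintype E]

lemma card_filter_sub_mem (W : Submodule F E) (a : E) : #{w | a - w ∈ W} = Nat.card W := by
  rw [Nat.card_eq_fintype_card, ← Fintype.card_coe]
  exact Fintype.card_congr ((Equiv.subLeft a).subtypeEquiv fun w => by simp)

lemma sum_cosetCount (A : Finset E) (W : Submodule F E) :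
    ∑ w, cosetCount A W w = Nat.card W * #A := by
  simp only [cosetCount, card_filter]
  rw [sum_comm]
  simp only [← card_filter, card_filter_sub_mem, sum_const, smul_eq_mul, mul_comm]

lemma sum_cosetCount_sq (A : Finset E) (W : Submodule F E) :
    ∑ w, cosetCount A W w ^ 2 = Nat.card W * #{w ∈ A ×ˢ A | w.1 - w.2 ∈ W} := by
  have hsq : ∀ w, cosetCount A W w ^ 2 = #{u ∈ A ×ˢ A | u.1 - w ∈ W ∧ u.2 - w ∈ W} := fun w => by
    rw [sq, cosetCount, ← card_product,
      ← filter_product (fun a => a - w ∈ W) (fun a => a - w ∈ W)]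
  have hfib : ∀ u : E × E, #{w | u.1 - w ∈ W ∧ u.2 - w ∈ W} =
      if u.1 - u.2 ∈ W then Nat.card W else 0 := by
    intro u
    have hiff : ∀ w, u.1 - w ∈ W ∧ u.2 - w ∈ W ↔ u.1 - u.2 ∈ W ∧ u.1 - w ∈ W := fun w => by
      constructor
      · rintro ⟨h₁, h₂⟩
        exact ⟨by simpa using W.sub_mem h₁ h₂, h₁⟩
      · rintro ⟨h₁, h₂⟩
        exact ⟨h₂, by simpa using W.sub_mem h₂ h₁⟩
    simp only [hiff, filter_and, filter_const]
    split_ifs <;> simp [card_filter_sub_mem]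
  calc ∑ w, cosetCount A W w ^ 2 = ∑ u ∈ A ×ˢ A, #{w | u.1 - w ∈ W ∧ u.2 - w ∈ W} := by
        simp only [hsq, card_filter]
        exact sum_comm
    _ = Nat.card W * #{w ∈ A ×ˢ A | w.1 - w.2 ∈ W} := by
        simp only [hfib, ← sum_filter, sum_const, smul_eq_mul, mul_comm]

variable [Finite F]

lemma card_mul_card_dualAnnihilator (W : Submodule F E) :
    Nat.card W * Nat.card W.dualAnnihilator = Fintype.card E := by
  have : Finite (Dual F E) := Module.finite_of_finite F
  rw [natCard_eq_pow_finrank (K := F), natCard_eq_pow_finrank (K := F) (V := W.dualAnnihilator),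
    ← pow_add, Subspace.finrank_add_finrank_dualAnnihilator_eq, ← natCard_eq_pow_finrank,
    Nat.card_eq_fintype_card]

theorem card_mul_sum_cosetCount_sq {A : Finset E} (hA : ∀ (c : F), ∀ v ∈ A, c • v ∈ A) {e₁ e₂ : ℤ}
    (he : ∀ L : Dual F E, L ≠ 0 → formBias A id L = e₁ ∨ formBias A id L = e₂)
    (W : Submodule F E) :
    Fintype.card E * ∑ w, (cosetCount A W w : ℤ) ^ 2 = Nat.card W ^ 2 * ((#A - e₁) * (#A - e₂)) +
      Nat.card W * Fintype.card E * ((e₁ + e₂) * #{a ∈ A | a ∈ W} - e₁ * e₂) := by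
  have : Finite (Dual F E) := Module.finite_of_finite F
  have := Fintype.ofFinite W.dualAnnihilator
  have hPoisson := sum_formBias_dualAnnihilator A id W
  have hpairs := sum_formBias_dualAnnihilator (A ×ˢ A) (fun w => w.1 - w.2) W
  simp only [← formBias_sq hA] at hpairs
  have hquad : ∑ L : W.dualAnnihilator, (formBias A id L.1 - e₁) * (formBias A id L.1 - e₂) =
      (#A - e₁) * (#A - e₂) := by
    rw [sum_eq_single 0 (fun L _ hL => ?_) (by simp), ZeroMemClass.coe_zero, formBias_zero]
    rcases he L.1 (by simpa using hL) with h | h <;> simp [h]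
  have hexpand : ∀ L : W.dualAnnihilator, (formBias A id L.1 - e₁) * (formBias A id L.1 - e₂) =
      formBias A id L.1 ^ 2 - (e₁ + e₂) * formBias A id L.1 + e₁ * e₂ := fun L => by ring
  simp only [hexpand, sum_add_distrib, sum_sub_distrib, ← mul_sum, sum_const, card_univ,
    hPoisson, hpairs, nsmul_eq_mul, id] at hquad
  have hsq := congrArg (Nat.cast (R := ℤ)) (sum_cosetCount_sq A W)
  have hcard := congrArg (Nat.cast (R := ℤ)) (card_mul_card_dualAnnihilator W)
  rw [Nat.card_eq_fintype_card (α := W.dualAnnihilator)] at hcard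
  push_cast at hsq hcard
  rw [hsq, ← hcard]
  linear_combination (Nat.card W : ℤ) ^ 2 * hquad

end CosetCount

section LinePlaneCount

open Finset Submodule
open scoped Classical

variable {F E : Type*} [Field F] [AddCommGroup E] [Module F E] {A : Finset E}

lemma smul_mem_iff_of_cone (hA : ∀ (c : F), ∀ v ∈ A, c • v ∈ A) {c : F} (hc : c ≠ 0) {v : E} :
    c • v ∈ A ↔ v ∈ A :=
  ⟨fun h => by simpa [smul_smul, hc] using hA c⁻¹ _ h, hA c v⟩

lemma cosetCount_add_of_mem (A : Finset E) {W : Submodule F E} {u : E} (hu : u ∈ W) (w : E) :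
    cosetCount A W (w + u) = cosetCount A W w := by
  simp only [cosetCount, ← sub_sub, W.sub_mem_iff_left hu]

lemma cosetCount_smul (hA : ∀ (c : F), ∀ v ∈ A, c • v ∈ A) (W : Submodule F E) {c : F}
    (hc : c ≠ 0) (w : E) : cosetCount A W (c • w) = cosetCount A W w := by
  refine card_nbij' (c⁻¹ • ·) (c • ·) ?_ ?_ ?_ ?_
  · intro a ha
    simp only [coe_filter, Set.mem_ofPred_eq] at ha ⊢
    refine ⟨hA _ _ ha.1, (W.smul_mem_iff hc).1 ?_⟩
    simpa only [smul_sub, smul_inv_smul₀ hc] using ha.2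
  · intro a ha
    simp only [coe_filter, Set.mem_ofPred_eq] at ha ⊢
    exact ⟨hA _ _ ha.1, smul_sub c a w ▸ W.smul_mem c ha.2⟩
  · intro a _
    exact smul_inv_smul₀ hc a
  · intro a _
    exact inv_smul_smul₀ hc a

lemma cosetCount_span_singleton_self (hA : ∀ (c : F), ∀ v ∈ A, c • v ∈ A) (h0 : (0 : E) ∈ A)
    {x : E} (hx : x ∉ A) : cosetCount A (F ∙ x) 0 = 1 := by
  refine card_eq_one.2 ⟨0, ?_⟩
  ext a
  simp only [sub_zero, mem_filter, mem_singleton]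
  constructor
  · rintro ⟨ha, hax⟩
    obtain ⟨z, rfl⟩ := mem_span_singleton.1 hax
    by_contra hz
    exact hx ((smul_mem_iff_of_cone hA fun h => hz (by rw [h, zero_smul])).1 ha)
  · rintro rfl
    exact ⟨h0, zero_mem _⟩

variable [Fintype F]

lemma cosetCount_span_singleton (A : Finset E) {x : E} (hx : x ≠ 0) (w : E) :
    cosetCount A (F ∙ x) w = #{z : F | w + z • x ∈ A} := by
  rw [← LinearMap.range_toSpanSingleton, ← card_filter_add_mem_eq_cosetCount
    (φ := LinearMap.toSpanSingleton F E x) (smul_left_injective F hx)]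
  simp only [LinearMap.toSpanSingleton_apply]

lemma cosetCount_span_pair (A : Finset E) {x v : E} (hx : x ≠ 0) (hv : v ∉ F ∙ x) (w : E) :
    cosetCount A (span F {x, v}) w = ∑ a : F, cosetCount A (F ∙ x) (w + a • v) := by
  let φ := (LinearMap.toSpanSingleton F E x).coprod (LinearMap.toSpanSingleton F E v)
  have hφ : Function.Injective φ := by
    rw [injective_iff_map_eq_zero]
    rintro ⟨a, b⟩ hab
    have hli : LinearIndependent F ![x, v] :=
      (LinearIndependent.pair_iff' hx).2 fun c hc => hv (mem_span_singleton.2 ⟨c, hc⟩)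
    simpa using LinearIndependent.pair_iff.1 hli a b hab
  have hrange : LinearMap.range φ = span F {x, v} := by
    rw [LinearMap.range_coprod, LinearMap.range_toSpanSingleton, LinearMap.range_toSpanSingleton,
      span_insert]
  rw [← hrange, ← card_filter_add_mem_eq_cosetCount hφ]
  simp only [cosetCount_span_singleton A hx, card_filter]
  rw [Fintype.sum_prod_type_right]
  simp only [φ, LinearMap.coprod_apply, LinearMap.toSpanSingleton_apply, add_assoc,
    add_comm (_ • x)]

lemma natCard_span_singleton {x : E} (hx : x ≠ 0) : Nat.card (F ∙ x) = Fintype.card F := by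
  rw [natCard_eq_pow_finrank (K := F), finrank_span_singleton hx, pow_one,
    Nat.card_eq_fintype_card]

lemma natCard_span_pair {x v : E} (hx : x ≠ 0) (hv : v ∉ F ∙ x) :
    Nat.card (span F {x, v}) = Fintype.card F ^ 2 := by
  have hli : LinearIndependent F ![x, v] :=
    (LinearIndependent.pair_iff' hx).2 fun c hc => hv (mem_span_singleton.2 ⟨c, hc⟩)
  have hrank := finrank_span_eq_card hli
  rw [range_cons, range_cons, range_empty, Set.union_empty, Set.singleton_union,
    Fintype.card_fin] at hrank
  have := FiniteDimensional.span_of_finite F (Set.toFinite {x, v})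
  rw [natCard_eq_pow_finrank (K := F), Nat.card_eq_fintype_card, hrank]

lemma cosetCount_span_pair_zero (hA : ∀ (c : F), ∀ v ∈ A, c • v ∈ A) (h0 : (0 : E) ∈ A)
    {x v : E} (hx : x ∉ A) (hv : v ∉ F ∙ x) : cosetCount A (span F {x, v}) 0 =
      1 + (Fintype.card F - 1) * cosetCount A (F ∙ x) v := by
  have hx0 : x ≠ 0 := (ne_of_mem_of_not_mem h0 hx).symm
  rw [cosetCount_span_pair A hx0 hv, ← add_sum_erase _ _ (mem_univ 0), zero_smul, add_zero,
    cosetCount_span_singleton_self hA h0 hx, sum_congr rfl fun a ha => by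
      rw [zero_add, cosetCount_smul hA _ (ne_of_mem_erase ha)],
    sum_const, card_erase_of_mem (mem_univ _), card_univ, smul_eq_mul]

end LinePlaneCount

section QuasiHermitianCone

open Finset Submodule
open scoped Classical

/-- The vector form of a quasi-Hermitian variety of `PG(r, q²)`: the set `A` of the vectors lying on
its points (and `0`). With `δ = -(-q)^(r-1)` the cardinality and the intersection numbers of both
parities of `r` take a uniform shape. -/
structure QuasiHermitianCone (F : Type*) {E : Type*} [Field F] [Fintype F] [AddCommGroup E]
    [Module F E] [Fintype E] (q : ℕ) (δ : ℤ) (A : Finset E) : Prop where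
  card_field : Fintype.card F = q ^ 2
  card_space : (Fintype.card E : ℤ) = q ^ 4 * δ ^ 2
  eq_neg_pow : ∃ k ≠ 0, δ = -(-q) ^ k
  zero_mem : 0 ∈ A
  smul_mem : ∀ (c : F), ∀ v ∈ A, c • v ∈ A
  card_eq : (#A : ℤ) = q ^ 3 * δ ^ 2 - δ * q * (q - 1)
  formBias_eq : ∀ L : Dual F E, L ≠ 0 →
    formBias A id L = q * δ ∨ formBias A id L = -(q * (q - 1) * δ)

namespace QuasiHermitianCone

variable {F E : Type*} [Field F] [Fintype F] [AddCommGroup E] [Module F E] [Fintype E]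
  {q : ℕ} {δ : ℤ} {A : Finset E}

lemma ne_zero_of_notMem (h : QuasiHermitianCone F q δ A) {x : E} (hx : x ∉ A) : x ≠ 0 :=
  (ne_of_mem_of_not_mem h.zero_mem hx).symm

lemma q_pos (h : QuasiHermitianCone F q δ A) : 0 < q := by
  have := h.card_field ▸ Fintype.card_pos (α := F)
  exact Nat.pos_of_ne_zero fun h0 => by simp [h0] at this

lemma delta_ne_zero (h : QuasiHermitianCone F q δ A) : δ ≠ 0 := by
  obtain ⟨k, -, rfl⟩ := h.eq_neg_pow
  exact neg_ne_zero.2 (pow_ne_zero _ (neg_ne_zero.2 (Nat.cast_ne_zero.2 h.q_pos.ne')))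

lemma delta_cases (h : QuasiHermitianCone F q δ A) :
    0 < δ ∨ δ = -q ^ 2 ∨ δ ≤ -q ^ 4 := by
  obtain ⟨k, hk, rfl⟩ := h.eq_neg_pow
  have hq : (1 : ℤ) ≤ q := by exact_mod_cast h.q_pos
  rcases Nat.even_or_odd k with hev | hodd
  · rw [hev.neg_pow, neg_inj, neg_le_neg_iff]
    rcases (show k = 2 ∨ 4 ≤ k by obtain ⟨j, rfl⟩ := hev; omega) with rfl | hk4
    · exact Or.inr (Or.inl rfl)
    · exact Or.inr (Or.inr (pow_le_pow_right₀ hq hk4))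
  · rw [hodd.neg_pow, neg_neg]
    exact Or.inl (by positivity)

lemma sum_cosetCount_sq_eq (h : QuasiHermitianCone F q δ A) (W : Submodule F E) :
    ∑ w, (cosetCount A W w : ℤ) ^ 2 = Nat.card W ^ 2 * (q ^ 2 * δ ^ 2 - q * δ) +
      Nat.card W * (q ^ 2 * (q - 1) * δ ^ 2 - q * (q - 2) * δ * cosetCount A W 0) := by
  have hq : (q : ℤ) ≠ 0 := by exact_mod_cast h.q_pos.ne'
  have hmom := card_mul_sum_cosetCount_sq h.smul_mem h.formBias_eq W
  have hzero : cosetCount A W 0 = #{a ∈ A | a ∈ W} := by simp only [cosetCount, sub_zero]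
  rw [h.card_space, h.card_eq, ← hzero] at hmom
  refine mul_left_cancel₀ (mul_ne_zero (pow_ne_zero 4 hq) (pow_ne_zero 2 h.delta_ne_zero)) ?_
  rw [hmom]
  ring

lemma sum_cosetCount_eq (h : QuasiHermitianCone F q δ A) (W : Submodule F E) :
    ∑ w, (cosetCount A W w : ℤ) = Nat.card W * (q ^ 3 * δ ^ 2 - δ * q * (q - 1)) := by
  rw [← h.card_eq]
  exact_mod_cast sum_cosetCount A W

theorem sum_line_sub_one_mul_sub_eq_zero (h : QuasiHermitianCone F q δ A) {x : E} (hx : x ∉ A) :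
    ∑ v, ((cosetCount A (F ∙ x) v : ℤ) - 1) * (cosetCount A (F ∙ x) v - (q + 1)) = 0 := by
  have hsq := h.sum_cosetCount_sq_eq (F ∙ x)
  have hsum := h.sum_cosetCount_eq (F ∙ x)
  rw [natCard_span_singleton (h.ne_zero_of_notMem hx), h.card_field] at hsq hsum
  rw [cosetCount_span_singleton_self h.smul_mem h.zero_mem hx] at hsq
  have hexpand : ∀ v, ((cosetCount A (F ∙ x) v : ℤ) - 1) * (cosetCount A (F ∙ x) v - (q + 1)) =
      (cosetCount A (F ∙ x) v : ℤ) ^ 2 - (q + 2) * cosetCount A (F ∙ x) v + (q + 1) :=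
    fun v => by ring
  simp only [hexpand, sum_add_distrib, sum_sub_distrib, ← mul_sum, sum_const, card_univ, hsq, hsum,
    nsmul_eq_mul, h.card_space]
  push_cast
  ring

lemma sum_plane_sub_cube (h : QuasiHermitianCone F q δ A) {x v : E} (hx : x ∉ A)
    (hv : v ∉ F ∙ x) :
    ∑ w, ((cosetCount A (span F {x, v}) w : ℤ) - q ^ 3) = -(q ^ 5 * (q - 1) * δ) := by
  rw [sum_sub_distrib, h.sum_cosetCount_eq, sum_const, card_univ, nsmul_eq_mul, h.card_space,
    natCard_span_pair (h.ne_zero_of_notMem hx) hv, h.card_field]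
  push_cast
  ring

lemma sum_plane_sub_cube_sq (h : QuasiHermitianCone F q δ A) {x v : E} (hx : x ∉ A)
    (hv : v ∉ F ∙ x) :
    ∑ w, ((cosetCount A (span F {x, v}) w : ℤ) - q ^ 3) ^ 2 = q ^ 6 * (q - 1) * δ ^ 2 -
      q ^ 5 * (q - 2) * δ * (cosetCount A (span F {x, v}) 0 - q ^ 3) := by
  have hsq := h.sum_cosetCount_sq_eq (span F {x, v})
  have hsum := h.sum_cosetCount_eq (span F {x, v})
  rw [natCard_span_pair (h.ne_zero_of_notMem hx) hv, h.card_field] at hsq hsum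
  have hexpand : ∀ w, ((cosetCount A (span F {x, v}) w : ℤ) - q ^ 3) ^ 2 =
      (cosetCount A (span F {x, v}) w : ℤ) ^ 2 - 2 * q ^ 3 * cosetCount A (span F {x, v}) w +
        q ^ 6 := fun w => by ring
  simp only [hexpand, sum_add_distrib, sum_sub_distrib, ← mul_sum, sum_const, card_univ, hsq, hsum,
    nsmul_eq_mul, h.card_space]
  push_cast
  ring

end QuasiHermitianCone

end QuasiHermitianCone

section ConeInCode

open Finset Submodule Polynomial
open scoped Classical

variable {F E : Type*} [Field F] [AddCommGroup E] [Module F E] {A : Finset E}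

lemma cast_cosetCount_line_eq_one [Finite F] (hA : ∀ (c : F), ∀ v ∈ A, c • v ∈ A) (h0 : (0 : E) ∈ A)
    (hc : (fun v => if v ∈ A then (1 : F) else 0) ∈ kernelCode F E) {x : E} (hx : x ∉ A) (v : E) :
    (cosetCount A (F ∙ x) v : F) = 1 := by
  have := Fintype.ofFinite F
  have hx0 : x ≠ 0 := (ne_of_mem_of_not_mem h0 hx).symm
  obtain ⟨P, hP, heval⟩ := exists_polynomial_eval_eq_sum_mul_pow hc 0 v x 0
  have hcount : ∀ m : F, (cosetCount A (F ∙ x) (m • v) : F) = P.eval m := fun m => by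
    simp [heval, cosetCount_span_singleton A hx0]
  have hconst : P.eval 1 = P.eval 0 := by
    rw [eq_C_of_natDegree_le_zero hP, eval_C, eval_C]
  rw [← hcount, ← hcount, one_smul, zero_smul, cosetCount_span_singleton_self hA h0 hx] at hconst
  rw [hconst, Nat.cast_one]

lemma one_le_cosetCount_line [Finite F] (hA : ∀ (c : F), ∀ v ∈ A, c • v ∈ A) (h0 : (0 : E) ∈ A)
    (hc : (fun v => if v ∈ A then (1 : F) else 0) ∈ kernelCode F E) {x : E} (hx : x ∉ A) (v : E) :
    1 ≤ cosetCount A (F ∙ x) v := by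
  rw [Nat.one_le_iff_ne_zero]
  intro h
  have := cast_cosetCount_line_eq_one hA h0 hc hx v
  rw [h, Nat.cast_zero] at this
  exact zero_ne_one this

variable [Fintype F]

lemma sum_cosetCount_line_add_smul (hA : ∀ (c : F), ∀ v ∈ A, c • v ∈ A) {x v : E} (hx : x ≠ 0)
    (hv : v ∉ F ∙ x) (w : E) :
    ∑ m : F, cosetCount A (F ∙ x) (v + m • w) + cosetCount A (F ∙ x) w =
      cosetCount A (F ∙ x) v + cosetCount A (span F {x, v}) w := by
  have hinv : ∀ m ∈ univ.erase (0 : F), cosetCount A (F ∙ x) (v + m • w) =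
      cosetCount A (F ∙ x) (w + m⁻¹ • v) := fun m hm => by
    have hm0 := ne_of_mem_erase hm
    rw [← cosetCount_smul hA _ (inv_ne_zero hm0), smul_add, inv_smul_smul₀ hm0, add_comm]
  have hreindex : ∑ m ∈ univ.erase (0 : F), cosetCount A (F ∙ x) (w + m⁻¹ • v) =
      ∑ m ∈ univ.erase (0 : F), cosetCount A (F ∙ x) (w + m • v) :=
    sum_nbij' (·⁻¹) (·⁻¹) (by simp) (by simp) (by simp) (by simp) (by simp)
  rw [cosetCount_span_pair A hx hv, ← add_sum_erase _ _ (mem_univ (0 : F)),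
    ← add_sum_erase _ (fun a => cosetCount A (F ∙ x) (w + a • v)) (mem_univ (0 : F)),
    sum_congr rfl hinv, hreindex, zero_smul, zero_smul, add_zero, add_zero]
  ring

lemma card_mul_line_le (hA : ∀ (c : F), ∀ v ∈ A, c • v ∈ A) (h0 : (0 : E) ∈ A)
    (hc : (fun v => if v ∈ A then (1 : F) else 0) ∈ kernelCode F E) {x v : E} (hx : x ∉ A)
    (hv : v ∉ F ∙ x) (w : E) :
    (Fintype.card F : ℤ) * cosetCount A (F ∙ x) v ≤
      (cosetCount A (F ∙ x) v : ℤ) ^ 2 + cosetCount A (span F {x, v}) w - 1 := by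
  have hx0 : x ≠ 0 := (ne_of_mem_of_not_mem h0 hx).symm
  have hdrop := sum_card_ne_zero_sub_le hc v w x 0
  simp only [ne_eq, ite_eq_right_iff, one_ne_zero, imp_false, not_not, zero_smul, add_zero,
    ← cosetCount_span_singleton A hx0] at hdrop
  have hle : Fintype.card F * cosetCount A (F ∙ x) v ≤
      ∑ m : F, (cosetCount A (F ∙ x) v - cosetCount A (F ∙ x) (v + m • w)) +
        ∑ m : F, cosetCount A (F ∙ x) (v + m • w) := by
    rw [← sum_add_distrib, ← smul_eq_mul, ← card_univ]
    exact card_nsmul_le_sum _ _ _ fun m _ => le_tsub_add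
  have hsum := sum_cosetCount_line_add_smul hA hx0 hv w
  have hone := one_le_cosetCount_line hA h0 hc hx w
  have hdrop' := hle.trans (Nat.add_le_add_right hdrop _)
  have hpos := one_le_cosetCount_line hA h0 hc hx v
  zify [hpos] at hdrop' hsum hone
  linarith

lemma card_filter_ne_zero_add_smul_mem (hA : ∀ (c : F), ∀ v ∈ A, c • v ∈ A) (a b : E) :
    #{z : F | z ≠ 0 ∧ a + z • b ∈ A} = #{z : F | z ≠ 0 ∧ b + z • a ∈ A} := by
  have hmaps : ∀ a b : E, ∀ z : F, z ≠ 0 ∧ a + z • b ∈ A → z⁻¹ ≠ 0 ∧ b + z⁻¹ • a ∈ A := by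
    rintro a b z ⟨hz, hmem⟩
    refine ⟨inv_ne_zero hz, ?_⟩
    have := hA z⁻¹ _ hmem
    rwa [smul_add, inv_smul_smul₀ hz, add_comm] at this
  exact card_nbij' (·⁻¹) (·⁻¹)
    (fun z hz => mem_filter.2 ⟨mem_univ _, hmaps a b z (mem_filter.1 hz).2⟩)
    (fun z hz => mem_filter.2 ⟨mem_univ _, hmaps b a z (mem_filter.1 hz).2⟩)
    (fun z _ => inv_inv z) (fun z _ => inv_inv z)

lemma sum_card_ne_zero_add_smul_mem_le (hA : ∀ (c : F), ∀ v ∈ A, c • v ∈ A) {x v : E}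
    (hx : x ≠ 0) (hv : v ∉ F ∙ x) (y : E) :
    ∑ m : F, #{z : F | z ≠ 0 ∧ x + m • v + z • y ∈ A} ≤ cosetCount A (span F {x, v}) y := by
  calc ∑ m : F, #{z : F | z ≠ 0 ∧ x + m • v + z • y ∈ A}
      = ∑ z : F, #{m : F | z ≠ 0 ∧ y + z • (x + m • v) ∈ A} := by
        simp only [card_filter_ne_zero_add_smul_mem hA _ y, card_filter]
        exact sum_comm
    _ ≤ ∑ z : F, #{a : F | y + z • x + a • v ∈ A} := by
        refine sum_le_sum fun z _ => ?_
        refine card_le_card_of_injOn (z * ·) ?_ ?_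
        · intro m hm
          simpa [smul_add, mul_smul, add_assoc] using (mem_filter.1 hm).2.2
        · intro m hm m' _ hmm
          exact mul_left_cancel₀ (mem_filter.1 hm).2.1 hmm
    _ = cosetCount A (span F {x, v}) y := by
        simp only [cosetCount_span_pair A hx hv, cosetCount_span_singleton A hx, card_filter]
        rw [sum_comm]
        simp only [add_assoc, add_comm (_ • x)]

lemma card_notMem_add_line_le (hA : ∀ (c : F), ∀ v ∈ A, c • v ∈ A) (h0 : (0 : E) ∈ A) {x : E}
    (hx : x ∉ A) (v : E) :
    #{m : F | x + m • v ∉ A} + cosetCount A (F ∙ x) v ≤ Fintype.card F + 1 := by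
  have hline : cosetCount A (F ∙ x) v ≤ #{m : F | x + m • v ∈ A} + 1 := by
    calc cosetCount A (F ∙ x) v = #{z : F | v + z • x ∈ A} :=
          cosetCount_span_singleton A (ne_of_mem_of_not_mem h0 hx).symm v
      _ ≤ #(insert 0 ({z | z ≠ 0 ∧ v + z • x ∈ A} : Finset F)) :=
          card_le_card fun z hz => by
            by_cases hz0 : z = 0
            · simp [hz0]
            · simpa [hz0] using hz
      _ ≤ #{z : F | z ≠ 0 ∧ v + z • x ∈ A} + 1 := card_insert_le _ _
      _ ≤ #{m : F | x + m • v ∈ A} + 1 := by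
          rw [card_filter_ne_zero_add_smul_mem hA]
          exact Nat.add_le_add_right (card_le_card (monotone_filter_right _ fun _ _ h => h.2)) 1
  have hsplit := card_filter_add_card_filter_not (s := univ) fun m : F => x + m • v ∈ A
  rw [card_univ] at hsplit
  omega

lemma card_ite_sub_ite_ker_ne_zero (A : Finset E) {L : Dual F E} {u y : E} (hu : L u = 0)
    (hy : L y ≠ 0) : #{z : F | (if u + z • y ∈ A then (1 : F) else 0) -
      (if L (u + z • y) = 0 then 1 else 0) ≠ 0} =
        (if u ∉ A then 1 else 0) + #{z : F | z ≠ 0 ∧ u + z • y ∈ A} := by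
  have hsplit : ∀ z : F, (if u + z • y ∈ A then (1 : F) else 0) -
      (if L (u + z • y) = 0 then 1 else 0) ≠ 0 ↔ z = 0 ∧ u ∉ A ∨ z ≠ 0 ∧ u + z • y ∈ A := by
    intro z
    by_cases hz : z = 0 <;> by_cases hm : u ∈ A <;> simp [hz, hm, hu, hy]
  rw [filter_congr fun z _ => hsplit z, filter_or, card_union_of_disjoint]
  · congr 1
    split_ifs with hm
    · exact card_eq_zero.2 (by ext; simp [hm])
    · exact card_eq_one.2 ⟨0, by ext; simp [hm]⟩
  · exact disjoint_filter.2 fun z _ h₁ h₂ => h₂.1 h₁.1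

/-- Apply the order-of-vanishing bound to the symmetric difference of `A` and a hyperplane through
`x` and `v` but not `y`, along the lines with direction `y`. -/
lemma card_mul_line_add_one_le (hA : ∀ (c : F), ∀ v ∈ A, c • v ∈ A) (h0 : (0 : E) ∈ A)
    (hc : (fun v => if v ∈ A then (1 : F) else 0) ∈ kernelCode F E) {x v y : E} (hx : x ∉ A)
    (hv : v ∉ F ∙ x) (hy : y ∉ A) (hyspan : y ∉ span F {x, v}) :
    Fintype.card F * (cosetCount A (F ∙ x) y + 1) + cosetCount A (F ∙ x) v ≤
      (cosetCount A (F ∙ x) y + 1) * cosetCount A (F ∙ x) y + cosetCount A (span F {x, v}) y +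
        (Fintype.card F + 1) := by
  have hx0 : x ≠ 0 := (ne_of_mem_of_not_mem h0 hx).symm
  obtain ⟨L, hLy, hL⟩ := Submodule.exists_le_ker_of_notMem hyspan
  have hLxv : ∀ m : F, L (x + m • v) = 0 := fun m =>
    hL (add_mem (subset_span (by simp)) (smul_mem _ m (subset_span (by simp))))
  have hdrop := sum_card_ne_zero_sub_le (sub_mem hc (ite_ker_mem_kernelCode L)) x v y 0
  simp only [Pi.sub_apply, card_ite_sub_ite_ker_ne_zero A (hLxv _) hLy] at hdrop
  have hzero : #{z : F | z ≠ 0 ∧ x + z • y ∈ A} = cosetCount A (F ∙ x) y := by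
    rw [card_filter_ne_zero_add_smul_mem hA, cosetCount_span_singleton A hx0]
    congr 1
    refine filter_congr fun z _ => and_iff_right_of_imp fun hz h0 => hy ?_
    rwa [h0, zero_smul, add_zero] at hz
  simp only [zero_smul, add_zero, hzero, if_pos hx] at hdrop
  rw [add_comm 1, Nat.add_sub_cancel] at hdrop
  have hle : Fintype.card F * (cosetCount A (F ∙ x) y + 1) ≤ ∑ m : F, (cosetCount A (F ∙ x) y + 1 -
        ((if x + m • v ∉ A then 1 else 0) + #{z : F | z ≠ 0 ∧ x + m • v + z • y ∈ A})) +
      ∑ m : F, ((if x + m • v ∉ A then 1 else 0) +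
        #{z : F | z ≠ 0 ∧ x + m • v + z • y ∈ A}) := by
    rw [← sum_add_distrib, ← smul_eq_mul, ← card_univ]
    exact card_nsmul_le_sum _ _ _ fun m _ => le_tsub_add
  rw [sum_add_distrib, ← card_filter] at hle
  have hplane := sum_card_ne_zero_add_smul_mem_le hA hx0 hv y
  have hout := card_notMem_add_line_le hA h0 hx v
  omega

end ConeInCode

namespace QuasiHermitianCone

open Finset Submodule
open scoped Classical

variable {F E : Type*} [Field F] [Fintype F] [AddCommGroup E] [Module F E] [Fintype E]
  {q : ℕ} {δ : ℤ} {A : Finset E}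

lemma sq_le_delta_sq (h : QuasiHermitianCone F q δ A) : (q : ℤ) ^ 2 ≤ δ ^ 2 := by
  obtain ⟨k, hk, hδ⟩ := h.eq_neg_pow
  have hdvd : (q : ℤ) ∣ δ := by
    rw [hδ, dvd_neg]
    exact dvd_pow (dvd_neg.2 dvd_rfl) hk
  have hδ0 := h.delta_ne_zero
  exact Int.le_of_dvd (by positivity) (pow_dvd_pow_of_dvd hdvd 2)

lemma cosetCount_line_eq_one_of_mem (h : QuasiHermitianCone F q δ A) {x v : E} (hx : x ∉ A)
    (hv : v ∈ F ∙ x) : cosetCount A (F ∙ x) v = 1 := by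
  rw [← zero_add v, cosetCount_add_of_mem A hv,
    cosetCount_span_singleton_self h.smul_mem h.zero_mem hx]

lemma exists_plane_le (h : QuasiHermitianCone F q δ A) {x v : E} (hx : x ∉ A) (hv : v ∉ F ∙ x) :
    ∃ w, (cosetCount A (span F {x, v}) w : ℤ) ≤ q ^ 3 := by
  by_contra! hlt
  have hsum : (q : ℤ) ^ 4 * δ ^ 2 ≤ -(q ^ 5 * (q - 1) * δ) := by
    rw [← h.sum_plane_sub_cube hx hv, ← h.card_space, ← card_univ, ← nsmul_one]
    exact card_nsmul_le_sum _ _ _ fun w _ => by linarith [hlt w]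
  have hq : (0 : ℤ) < q := by exact_mod_cast h.q_pos
  have hprod : δ * (δ + q * (q - 1)) ≤ 0 := by
    refine le_of_mul_le_mul_left ?_ (pow_pos hq 4)
    linarith
  have hnonneg : 0 ≤ (q : ℤ) * (q - 1) := mul_nonneg hq.le (by linarith)
  rcases h.delta_cases with hpos | hδ | hδ
  · nlinarith
  · rw [hδ] at hprod
    nlinarith [pow_pos hq 2]
  · nlinarith [pow_pos hq 2, pow_pos hq 4, mul_nonneg hq.le hnonneg]

lemma notMem_span_singleton_of_lt (h : QuasiHermitianCone F q δ A) {x v : E} (hx : x ∉ A)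
    (hv : q + 1 < cosetCount A (F ∙ x) v) : v ∉ F ∙ x := fun hmem => by
  rw [h.cosetCount_line_eq_one_of_mem hx hmem] at hv
  omega

lemma cosetCount_line_le_or_le (h : QuasiHermitianCone F q δ A) (hq : 5 ≤ q)
    (hc : (fun v => if v ∈ A then (1 : F) else 0) ∈ kernelCode F E) {x : E} (hx : x ∉ A) (v : E) :
    cosetCount A (F ∙ x) v ≤ q + 1 ∨ (q : ℤ) ^ 2 - q - 1 ≤ cosetCount A (F ∙ x) v := by
  by_cases hv : v ∈ F ∙ x
  · exact Or.inl (by rw [h.cosetCount_line_eq_one_of_mem hx hv]; omega)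
  obtain ⟨w, hw⟩ := h.exists_plane_le hx hv
  have hquad := card_mul_line_le h.smul_mem h.zero_mem hc hx hv w
  rw [h.card_field] at hquad
  push_cast at hquad
  by_contra! hbetween
  have hlo : (q : ℤ) + 2 ≤ cosetCount A (F ∙ x) v := by exact_mod_cast hbetween.1
  have hhi : (cosetCount A (F ∙ x) v : ℤ) ≤ q ^ 2 - q - 2 := by linarith [hbetween.2]
  have : (5 : ℤ) ≤ q := by exact_mod_cast hq
  nlinarith [mul_nonneg (sub_nonneg.2 hlo) (sub_nonneg.2 hhi)]

lemma cosetCount_line_ne (h : QuasiHermitianCone F q δ A)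
    (hc : (fun v => if v ∈ A then (1 : F) else 0) ∈ kernelCode F E) {x : E} (hx : x ∉ A) (v : E) :
    cosetCount A (F ∙ x) v ≠ q := fun heq => by
  have hone := cast_cosetCount_line_eq_one h.smul_mem h.zero_mem hc hx v
  have hcard := FiniteField.cast_card_eq_zero F
  rw [h.card_field, Nat.cast_pow, ← heq, hone, one_pow] at hcard
  exact one_ne_zero hcard

lemma le_plane_sub_of_line_eq (h : QuasiHermitianCone F q δ A) (hq : 5 ≤ q)
    (hc : (fun v => if v ∈ A then (1 : F) else 0) ∈ kernelCode F E) {x v : E} (hx : x ∉ A)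
    (hv : q + 1 < cosetCount A (F ∙ x) v) {w : E} (hw : w ∉ span F {x, v}) {a : F}
    (ha : cosetCount A (F ∙ x) (w + a • v) = q + 1) :
    (q : ℤ) ^ 2 - 2 * q - 2 ≤ cosetCount A (span F {x, v}) w - q ^ 3 + (2 * q + 2) := by
  have hvx := h.notMem_span_singleton_of_lt hx hv
  obtain ⟨z, hz⟩ : ∃ z : F, w + a • v + z • x ∉ A := by
    by_contra! hall
    rw [cosetCount_span_singleton A (h.ne_zero_of_notMem hx),
      filter_true_of_mem fun z _ => hall z, card_univ, h.card_field] at ha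
    nlinarith
  have hmem : a • v + z • x ∈ span F {x, v} :=
    add_mem (Submodule.smul_mem _ _ (subset_span (by simp)))
      (Submodule.smul_mem _ _ (subset_span (by simp)))
  have hbound := card_mul_line_add_one_le h.smul_mem h.zero_mem hc hx hvx hz (by
    rwa [add_assoc, Submodule.add_mem_iff_left _ hmem])
  rw [cosetCount_add_of_mem A (Submodule.smul_mem _ z (mem_span_singleton_self x)), ha,
    add_assoc w, cosetCount_add_of_mem A hmem, h.card_field] at hbound
  have hlong := (h.cosetCount_line_le_or_le hq hc hx v).resolve_left hv.not_ge
  zify at hbound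
  linarith

lemma le_abs_plane_sub (h : QuasiHermitianCone F q δ A) (hq : 5 ≤ q)
    (hc : (fun v => if v ∈ A then (1 : F) else 0) ∈ kernelCode F E) {x v : E} (hx : x ∉ A)
    (hv : q + 1 < cosetCount A (F ∙ x) v) {w : E} (hw : w ∉ span F {x, v})
    (hshort : ∀ a : F, cosetCount A (F ∙ x) (w + a • v) ≤ q + 1) :
    (q : ℤ) ^ 2 - 2 * q - 2 ≤
      |(cosetCount A (span F {x, v}) w : ℤ) - q ^ 3 + (2 * q + 2)| := by
  rw [le_abs]
  by_cases htouch : ∃ a : F, cosetCount A (F ∙ x) (w + a • v) = q + 1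
  · obtain ⟨a, ha⟩ := htouch
    exact Or.inl (h.le_plane_sub_of_line_eq hq hc hx hv hw ha)
  · right
    have hle : ∀ a : F, cosetCount A (F ∙ x) (w + a • v) ≤ q - 1 := fun a => by
      have := h.cosetCount_line_ne hc hx (w + a • v)
      have := hshort a
      have := not_exists.1 htouch a
      omega
    have hsum : cosetCount A (span F {x, v}) w ≤ q ^ 2 * (q - 1) := by
      rw [cosetCount_span_pair A (h.ne_zero_of_notMem hx) (h.notMem_span_singleton_of_lt hx hv),
        ← h.card_field, ← card_univ, ← smul_eq_mul]
      exact sum_le_card_nsmul _ _ _ fun a _ => hle a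
    zify [h.q_pos] at hsum
    linarith

lemma card_long_line_mul_le (h : QuasiHermitianCone F q δ A) (hq : 5 ≤ q)
    (hc : (fun v => if v ∈ A then (1 : F) else 0) ∈ kernelCode F E) {x : E} (hx : x ∉ A) :
    4 * (#{b : E | q + 1 < cosetCount A (F ∙ x) b} : ℤ) *
      (((q : ℤ) ^ 2 - q - 2) * (q ^ 2 - 2 * q - 2)) ≤ q ^ 2 * Fintype.card E := by
  have : (5 : ℤ) ≤ q := by exact_mod_cast hq
  have hterm : ∀ v : E, (if q + 1 < cosetCount A (F ∙ x) v then
      4 * (((q : ℤ) ^ 2 - q - 2) * (q ^ 2 - 2 * q - 2)) else 0) - (q : ℤ) ^ 2 ≤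
      4 * (((cosetCount A (F ∙ x) v : ℤ) - 1) * (cosetCount A (F ∙ x) v - (q + 1))) := fun v => by
    split_ifs with hv
    · have hlong := (h.cosetCount_line_le_or_le hq hc hx v).resolve_left hv.not_ge
      have : ((q : ℤ) ^ 2 - q - 2) * (q ^ 2 - 2 * q - 2) ≤
          ((cosetCount A (F ∙ x) v : ℤ) - 1) * (cosetCount A (F ∙ x) v - (q + 1)) :=
        mul_le_mul (by linarith) (by linarith) (by nlinarith) (by nlinarith)
      nlinarith
    · nlinarith [sq_nonneg (2 * (cosetCount A (F ∙ x) v : ℤ) - q - 2)]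
  have hsum := sum_le_sum fun v (_ : v ∈ univ) => hterm v
  rw [← mul_sum, h.sum_line_sub_one_mul_sub_eq_zero hx, mul_zero, sum_sub_distrib, ← sum_filter,
    sum_const, sum_const, card_univ, nsmul_eq_mul, nsmul_eq_mul] at hsum
  linarith

lemma card_filter_mem_span_pair (h : QuasiHermitianCone F q δ A) {x v : E} (hx : x ∉ A)
    (hv : v ∉ F ∙ x) : #{w | w ∈ span F {x, v}} = q ^ 4 := by
  rw [← Fintype.card_subtype, ← Nat.card_eq_fintype_card]
  exact (natCard_span_pair (h.ne_zero_of_notMem hx) hv).trans (by rw [h.card_field, ← pow_mul])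

lemma card_le_card_short_add (h : QuasiHermitianCone F q δ A) {x v : E} (hx : x ∉ A)
    (hv : v ∉ F ∙ x) : Fintype.card E ≤ q ^ 4 +
      #{w | w ∉ span F {x, v} ∧ ∀ a : F, cosetCount A (F ∙ x) (w + a • v) ≤ q + 1} +
        q ^ 2 * #{b | q + 1 < cosetCount A (F ∙ x) b} := by
  set G : Finset E := {w | w ∉ span F {x, v} ∧ ∀ a : F, cosetCount A (F ∙ x) (w + a • v) ≤ q + 1}
  set B : Finset E := {b | q + 1 < cosetCount A (F ∙ x) b}
  set S : Finset E := {w | w ∈ span F {x, v}}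
  have hcover : univ ⊆ S ∪ G ∪ univ.biUnion fun a : F => B.image (· - a • v) := fun w _ => by
    by_cases hw : w ∈ S ∪ G
    · exact mem_union_left _ hw
    · obtain ⟨a, ha⟩ : ∃ a : F, q + 1 < cosetCount A (F ∙ x) (w + a • v) := by
        rw [mem_union, not_or, mem_filter_univ, mem_filter_univ] at hw
        simpa only [hw.1, not_false_eq_true, true_and, not_forall, not_le] using hw.2
      exact mem_union_right _ (mem_biUnion.2 ⟨a, mem_univ a, mem_image.2
        ⟨w + a • v, (mem_filter_univ _).2 ha, add_sub_cancel_right w _⟩⟩)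
  have hB : #(univ.biUnion fun a : F => B.image (· - a • v)) ≤ q ^ 2 * #B := by
    rw [← h.card_field, ← card_univ]
    exact card_biUnion_le_card_mul _ _ _ fun _ _ => card_image_le
  rw [← card_univ, ← h.card_filter_mem_span_pair hx hv]
  exact (card_le_card hcover).trans ((card_union_le _ _).trans (add_le_add (card_union_le _ _) hB))

lemma card_short_mul_le (h : QuasiHermitianCone F q δ A) (hq : 5 ≤ q)
    (hc : (fun v => if v ∈ A then (1 : F) else 0) ∈ kernelCode F E) {x v : E} (hx : x ∉ A)
    (hv : q + 1 < cosetCount A (F ∙ x) v) {D : ℤ}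
    (hD : (cosetCount A (span F {x, v}) 0 : ℤ) - q ^ 3 = D) :
    (q : ℤ) ^ 4 * (D + (2 * q + 2)) ^ 2 +
      #{w | w ∉ span F {x, v} ∧ ∀ a : F, cosetCount A (F ∙ x) (w + a • v) ≤ q + 1} *
        ((q : ℤ) ^ 2 - 2 * q - 2) ^ 2 ≤
      q ^ 4 * δ ^ 2 * (q ^ 2 * (q - 1) + (2 * q + 2) ^ 2) -
        q ^ 5 * δ * ((q - 2) * D + 4 * (q ^ 2 - 1)) := by
  have hvx := h.notMem_span_singleton_of_lt hx hv
  have : (5 : ℤ) ≤ q := by exact_mod_cast hq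
  set c : ℤ := 2 * q + 2 with hcdef
  have hcenter : ∑ w, ((cosetCount A (span F {x, v}) w : ℤ) - q ^ 3 + c) ^ 2 =
      q ^ 4 * δ ^ 2 * (q ^ 2 * (q - 1) + c ^ 2) -
        q ^ 5 * δ * ((q - 2) * D + 4 * (q ^ 2 - 1)) := by
    simp only [add_sq _ c, sum_add_distrib, ← sum_mul, ← mul_sum, h.sum_plane_sub_cube hx hvx,
      h.sum_plane_sub_cube_sq hx hvx, sum_const, card_univ, nsmul_eq_mul, h.card_space, hD]
    rw [hcdef]
    ring
  have hterm : ∀ w : E, (if w ∈ span F {x, v} then (D + c) ^ 2 else 0) +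
      (if w ∉ span F {x, v} ∧ ∀ a : F, cosetCount A (F ∙ x) (w + a • v) ≤ q + 1 then
        ((q : ℤ) ^ 2 - 2 * q - 2) ^ 2 else 0) ≤
      ((cosetCount A (span F {x, v}) w : ℤ) - q ^ 3 + c) ^ 2 := fun w => by
    by_cases hw : w ∈ span F {x, v}
    · rw [← zero_add w, cosetCount_add_of_mem A hw, zero_add, hD]
      simp [hw]
    · rw [if_neg hw, zero_add]
      split_ifs with hgood
      · rw [← sq_abs (_ + c)]
        exact pow_le_pow_left₀ (by nlinarith) (h.le_abs_plane_sub hq hc hx hv hw hgood.2) 2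
      · positivity
  have hcard : (#{w | w ∈ span F {x, v}} : ℤ) = q ^ 4 := by
    exact_mod_cast h.card_filter_mem_span_pair hx hvx
  rw [← hcenter, ← hcard, ← nsmul_eq_mul, ← nsmul_eq_mul, ← sum_const, ← sum_const, sum_filter,
    sum_filter, ← sum_add_distrib]
  exact sum_le_sum fun w _ => hterm w

lemma neg_mul_sub_sq_le {q δ D : ℤ} (hq : 5 ≤ q) (hδ : 0 < δ ∨ δ = -q ^ 2 ∨ δ ≤ -q ^ 4)
    (hlo : q ^ 4 - 2 * q ^ 3 - 2 * q ^ 2 + q + 2 ≤ D) (hhi : D ≤ q ^ 4 - q ^ 3 - q ^ 2 + 1) :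
    -(q * δ * ((q - 2) * D + 4 * (q ^ 2 - 1))) - (D + (2 * q + 2)) ^ 2 ≤ 2 * q ^ 2 * δ ^ 2 := by
  obtain ⟨t, rfl⟩ : ∃ t, q = t + 5 := ⟨q - 5, by ring⟩
  have ht : 0 ≤ t := by linarith
  have hD : 0 ≤ D := le_trans (by ring_nf; positivity) hlo
  have hT : 0 ≤ (t + 5 - 2) * D + 4 * ((t + 5) ^ 2 - 1) := by
    have : 0 ≤ 4 * ((t + 5) ^ 2 - 1) := by ring_nf; positivity
    have := mul_nonneg (show 0 ≤ t + 5 - 2 by linarith) hD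
    linarith
  rcases hδ with hpos | rfl | hneg
  · have : 0 ≤ (t + 5) * δ * ((t + 5 - 2) * D + 4 * ((t + 5) ^ 2 - 1)) := by positivity
    nlinarith [sq_nonneg (D + (2 * (t + 5) + 2)), mul_nonneg (sq_nonneg (t + 5)) (sq_nonneg δ)]
  · obtain ⟨d, rfl⟩ : ∃ d, D = (t + 5) ^ 4 - 2 * (t + 5) ^ 3 - 2 * (t + 5) ^ 2 + (t + 5) + 2 + d :=
      ⟨_, (add_sub_cancel _ _).symm⟩
    have hd : 0 ≤ d := by linarith
    rw [← sub_nonneg]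
    ring_nf
    positivity
  · have hT' : (t + 5 - 2) * D + 4 * ((t + 5) ^ 2 - 1) ≤ 2 * (t + 5) * (t + 5) ^ 4 := by
      have := mul_le_mul_of_nonneg_left hhi (show 0 ≤ t + 5 - 2 by linarith)
      refine le_trans (add_le_add_left this _) ?_
      rw [← sub_nonneg]
      ring_nf
      positivity
    have hδ0 : 0 ≤ -δ := by linarith [pow_nonneg (show 0 ≤ t + 5 by linarith) 4]
    have h₁ := mul_le_mul_of_nonneg_left hT' (mul_nonneg (show 0 ≤ t + 5 by linarith) hδ0)
    have h₂ := mul_le_mul_of_nonneg_left hneg (show 0 ≤ 2 * (t + 5) ^ 2 * -δ by positivity)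
    nlinarith [sq_nonneg (D + (2 * (t + 5) + 2))]

lemma four_mul_add_lt {q : ℤ} (hq : 8 ≤ q) :
    q ^ 6 * (q ^ 2 - 2 * q - 2) + 4 * q ^ 2 * (q ^ 2 - q - 2) * (q ^ 3 + 5 * q ^ 2 + 8 * q + 4) <
      4 * (q ^ 2 - 1) * (q ^ 2 - q - 2) * (q ^ 2 - 2 * q - 2) ^ 2 := by
  obtain ⟨t, rfl⟩ : ∃ t, q = t + 8 := ⟨q - 8, by ring⟩
  have ht : 0 ≤ t := by linarith
  rw [← sub_pos]
  ring_nf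
  positivity

lemma pow_four_add_add_mul_lt {q N g b : ℤ} (hq : 8 ≤ q) (hN : q ^ 6 ≤ N)
    (hb : 4 * b * ((q ^ 2 - q - 2) * (q ^ 2 - 2 * q - 2)) ≤ q ^ 2 * N)
    (hg : g * (q ^ 2 - 2 * q - 2) ^ 2 ≤ N * (q ^ 3 + 5 * q ^ 2 + 8 * q + 4)) :
    q ^ 4 + g + q ^ 2 * b < N := by
  have hlt := four_mul_add_lt hq
  have hP : 0 < q ^ 2 - 2 * q - 2 := by nlinarith
  have hJ : 0 < q ^ 2 - q - 2 := by nlinarith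
  set P := q ^ 2 - 2 * q - 2
  set J := q ^ 2 - q - 2
  set M := q ^ 3 + 5 * q ^ 2 + 8 * q + 4
  have hN0 : 0 < N := lt_of_lt_of_le (by positivity) hN
  refine lt_of_mul_lt_mul_left ?_ (show 0 ≤ 4 * q ^ 2 * J * P ^ 2 by positivity)
  calc 4 * q ^ 2 * J * P ^ 2 * (q ^ 4 + g + q ^ 2 * b)
      = 4 * J * P ^ 2 * q ^ 6 + 4 * q ^ 2 * J * (g * P ^ 2) +
          q ^ 4 * P * (4 * b * (J * P)) := by ring
    _ ≤ 4 * J * P ^ 2 * N + 4 * q ^ 2 * J * (N * M) + q ^ 4 * P * (q ^ 2 * N) := by gcongr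
    _ = 4 * J * P ^ 2 * N + N * (q ^ 6 * P + 4 * q ^ 2 * J * M) := by ring
    _ < 4 * J * P ^ 2 * N + N * (4 * (q ^ 2 - 1) * J * P ^ 2) := by gcongr
    _ = 4 * q ^ 2 * J * P ^ 2 * N := by ring

theorem cosetCount_line_le (h : QuasiHermitianCone F q δ A) (hq : 8 ≤ q)
    (hc : (fun v => if v ∈ A then (1 : F) else 0) ∈ kernelCode F E) {x : E} (hx : x ∉ A) (v : E) :
    cosetCount A (F ∙ x) v ≤ q + 1 := by
  by_contra! hv
  have hvx := h.notMem_span_singleton_of_lt hx hv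
  have hq' : (8 : ℤ) ≤ q := by exact_mod_cast hq
  have hlong := (h.cosetCount_line_le_or_le (by omega) hc hx v).resolve_left hv.not_ge
  have hfull : (cosetCount A (F ∙ x) v : ℤ) ≤ q ^ 2 := by
    rw [cosetCount_span_singleton A (h.ne_zero_of_notMem hx)]
    exact_mod_cast h.card_field ▸ card_le_univ _
  obtain ⟨D, hD⟩ : ∃ D, (cosetCount A (span F {x, v}) 0 : ℤ) - q ^ 3 = D := ⟨_, rfl⟩
  have hDs : D = 1 + ((q : ℤ) ^ 2 - 1) * cosetCount A (F ∙ x) v - q ^ 3 := by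
    rw [← hD, cosetCount_span_pair_zero h.smul_mem h.zero_mem hx hvx, h.card_field]
    push_cast [Nat.one_le_pow 2 q (by omega)]
    ring
  have hcorr := neg_mul_sub_sq_le (by linarith) h.delta_cases (D := D) (by nlinarith) (by nlinarith)
  have hshort := h.card_short_mul_le (by omega) hc hx hv hD
  have hfew := h.card_long_line_mul_le (by omega) hc hx
  have hcover := (Nat.cast_le (α := ℤ)).2 (h.card_le_card_short_add hx hvx)
  push_cast at hcover
  rw [h.card_space] at hfew hcover
  refine hcover.not_gt (pow_four_add_add_mul_lt hq' ?_ hfew ?_)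
  · nlinarith [mul_le_mul_of_nonneg_left h.sq_le_delta_sq
      (pow_nonneg (Nat.cast_nonneg (α := ℤ) q) 4)]
  · have := mul_le_mul_of_nonneg_left hcorr (pow_nonneg (Nat.cast_nonneg (α := ℤ) q) 4)
    linarith

lemma cosetCount_line_mod_eq_one (h : QuasiHermitianCone F q δ A) (hq : q.Prime)
    (hc : (fun v => if v ∈ A then (1 : F) else 0) ∈ kernelCode F E) {x : E} (hx : x ∉ A) (v : E) :
    cosetCount A (F ∙ x) v % q = 1 := by
  obtain ⟨p, hp⟩ := CharP.exists F
  have hpq : p = q := by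
    have hcast := FiniteField.cast_card_eq_zero F
    rw [h.card_field, Nat.cast_pow, sq_eq_zero_iff, CharP.cast_eq_zero_iff F p] at hcast
    exact (hq.eq_one_or_self_of_dvd p hcast).resolve_left (CharP.char_ne_one F p)
  subst hpq
  have hone := cast_cosetCount_line_eq_one h.smul_mem h.zero_mem hc hx v
  rw [← Nat.cast_one, CharP.cast_eq_iff_mod_eq F p, Nat.mod_eq_of_lt hq.one_lt] at hone
  exact hone

lemma eight_le_of_isPrimePow {q : ℕ} (hq : IsPrimePow q) (hprime : ¬q.Prime) (hq4 : q ≠ 4) :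
    8 ≤ q := by
  by_contra! hlt
  have hsix : ¬IsPrimePow 6 := fun h6 => by
    obtain ⟨p, -, huniq⟩ := isPrimePow_iff_unique_prime_dvd.1 h6
    have := huniq 2 ⟨Nat.prime_two, by norm_num⟩
    have := huniq 3 ⟨Nat.prime_three, by norm_num⟩
    omega
  have := hq.two_le
  interval_cases q
  exacts [hprime Nat.prime_two, hprime Nat.prime_three, hq4 rfl, hprime Nat.prime_five, hsix hq,
    hprime Nat.prime_seven]

theorem cosetCount_line_eq_one_or (h : QuasiHermitianCone F q δ A) (hq4 : q ≠ 4)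
    (hc : (fun v => if v ∈ A then (1 : F) else 0) ∈ kernelCode F E) {x : E} (hx : x ∉ A) (v : E) :
    cosetCount A (F ∙ x) v = 1 ∨ cosetCount A (F ∙ x) v = q + 1 := by
  suffices hzero : ((cosetCount A (F ∙ x) v : ℤ) - 1) * (cosetCount A (F ∙ x) v - (q + 1)) = 0 by
    rcases mul_eq_zero.1 hzero with hs | hs
    · exact Or.inl (by exact_mod_cast sub_eq_zero.1 hs)
    · exact Or.inr (by exact_mod_cast sub_eq_zero.1 hs)
  have hsum := h.sum_line_sub_one_mul_sub_eq_zero hx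
  by_cases hprime : q.Prime
  · refine (sum_eq_zero_iff_of_nonneg fun w _ => ?_).1 hsum v (mem_univ v)
    have hdiv := Nat.mod_add_div (cosetCount A (F ∙ x) w) q
    rw [h.cosetCount_line_mod_eq_one hprime hc hx w] at hdiv
    rw [← hdiv]
    generalize cosetCount A (F ∙ x) w / q = k
    rcases Nat.eq_zero_or_pos k with rfl | hpos
    · simp
    · have : (1 : ℤ) ≤ k := by exact_mod_cast hpos
      push_cast
      exact mul_nonneg (by nlinarith) (by nlinarith)
  · have hq8 : 8 ≤ q := by
      refine eight_le_of_isPrimePow ?_ hprime hq4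
      rw [← isPrimePow_pow_iff two_ne_zero, ← h.card_field]
      exact Fintype.isPrimePow_card_of_field
    refine (sum_eq_zero_iff_of_nonpos fun w _ => ?_).1 hsum v (mem_univ v)
    have hlo := one_le_cosetCount_line h.smul_mem h.zero_mem hc hx w
    have hhi := h.cosetCount_line_le hq8 hc hx w
    zify at hlo hhi
    exact mul_nonpos_of_nonneg_of_nonpos (by linarith) (by linarith)

end QuasiHermitianCone

section PowerForms

open Finset Polynomial
open scoped Classical

/-- The homogeneous forms of degree `k` on `E` that are linear combinations of `k`-th powers of
linear forms, regarded as functions. -/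
noncomputable def powerForms (K E : Type*) [Field K] [AddCommGroup E] [Module K E] (k : ℕ) :
    Submodule K (E → K) :=
  Submodule.span K (Set.range fun (L : Dual K E) v => L v ^ k)

variable {K E : Type*} [Field K] [AddCommGroup E] [Module K E] {k : ℕ} {g : E → K}

lemma pow_mem_powerForms (L : Dual K E) (k : ℕ) : (fun v => L v ^ k) ∈ powerForms K E k :=
  Submodule.subset_span ⟨L, rfl⟩

lemma comp_mem_powerForms (hg : g ∈ powerForms K E k) (f : E →ₗ[K] E) :
    (fun v => g (f v)) ∈ powerForms K E k := by
  induction hg using Submodule.span_induction with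
  | mem g h =>
    obtain ⟨L, rfl⟩ := h
    exact pow_mem_powerForms (L.comp f) k
  | zero => exact Submodule.zero_mem _
  | add g g' _ _ hg hg' => exact Submodule.add_mem _ hg hg'
  | smul a g _ hg => exact Submodule.smul_mem _ a hg

lemma exists_dual_eq_of_mem_powerForms_one (hg : g ∈ powerForms K E 1) :
    ∃ T : Dual K E, ∀ v, T v = g v := by
  induction hg using Submodule.span_induction with
  | mem g h =>
    obtain ⟨L, rfl⟩ := h
    exact ⟨L, fun v => (pow_one _).symm⟩
  | zero => exact ⟨0, fun v => rfl⟩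
  | add g g' _ _ hg hg' =>
    obtain ⟨T, hT⟩ := hg
    obtain ⟨T', hT'⟩ := hg'
    exact ⟨T + T', fun v => congrArg₂ (· + ·) (hT v) (hT' v)⟩
  | smul a g _ hg =>
    obtain ⟨T, hT⟩ := hg
    exact ⟨a • T, fun v => congrArg (a • ·) (hT v)⟩

lemma exists_polynomial_eval_add_smul (hg : g ∈ powerForms K E k) (u v : E) :
    ∃ P : K[X], P.natDegree ≤ k ∧ P.coeff k = g v ∧ ∀ t, P.eval t = g (u + t • v) := by
  induction hg using Submodule.span_induction with
  | mem g h =>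
    obtain ⟨L, rfl⟩ := h
    have hlin : (C (L v) * X + C (L u)).natDegree ≤ 1 := natDegree_linear_le
    refine ⟨(C (L v) * X + C (L u)) ^ k, ?_, ?_, fun t => ?_⟩
    · exact (natDegree_pow_le_of_le k hlin).trans (mul_one k).le
    · have := coeff_pow_of_natDegree_le (m := k) hlin
      rw [mul_one] at this
      simp [this]
    · simp only [eval_pow, eval_add, eval_mul, eval_C, eval_X, map_add, map_smul, smul_eq_mul]
      ring
  | zero => exact ⟨0, by simp, by simp, by simp⟩
  | add g g' _ _ hg hg' =>
    obtain ⟨P, hP, hPc, hPg⟩ := hg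
    obtain ⟨R, hR, hRc, hRg⟩ := hg'
    exact ⟨P + R, (natDegree_add_le _ _).trans (max_le hP hR), by simp [hPc, hRc],
      fun t => by simp [hPg, hRg]⟩
  | smul a g _ hg =>
    obtain ⟨P, hP, hPc, hPg⟩ := hg
    exact ⟨C a * P, (natDegree_C_mul_le _ _).trans hP, by simp [hPc], fun t => by simp [hPg]⟩

variable [Fintype K]

lemma sum_mul_pow_mem_powerForms {c : E → K} (hc : c ∈ kernelCode K E) (x : E)
    (hk : k < Fintype.card K - 1) :
    (fun v => ∑ z : K, c (v + z • x) * z ^ k) ∈ powerForms K E k := by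
  induction hc using Submodule.span_induction with
  | mem c h =>
    obtain ⟨L, rfl⟩ := h
    simp only [map_add, map_smul, smul_eq_mul]
    by_cases hL : L x = 0
    · simp only [hL, mul_zero, ← mul_sum, FiniteField.sum_pow_lt_card_sub_one K k hk]
      exact Submodule.zero_mem _
    · simp only [sum_ite_affine_eq_zero_mul_pow hL]
      exact pow_mem_powerForms (-(L x)⁻¹ • L) k
  | zero => simp only [Pi.zero_apply, zero_mul, sum_const_zero]; exact Submodule.zero_mem _
  | add c d _ _ hc hd =>
    simp only [Pi.add_apply, add_mul, sum_add_distrib]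
    exact Submodule.add_mem _ hc hd
  | smul a c _ hc =>
    simp only [Pi.smul_apply, smul_eq_mul, mul_assoc, ← mul_sum]
    exact Submodule.smul_mem _ a hc

lemma card_filter_line_eq_zero_le (hg : g ∈ powerForms K E k) {v : E} (hv : g v ≠ 0) (u : E) :
    #{t : K | g (u + t • v) = 0} ≤ k := by
  obtain ⟨P, hdeg, hcoeff, heval⟩ := exists_polynomial_eval_add_smul hg u v
  have hP : P ≠ 0 := fun h => hv (by rw [← hcoeff, h, coeff_zero])
  calc #{t : K | g (u + t • v) = 0} ≤ #P.roots.toFinset := card_le_card fun t ht => by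
        rw [Multiset.mem_toFinset, mem_roots hP, IsRoot.def, heval]
        exact (mem_filter.1 ht).2
    _ ≤ P.natDegree := (Multiset.toFinset_card_le _).trans P.card_roots'
    _ ≤ k := hdeg

/-- Schwartz-Zippel for power forms: average the number of zeros over the translates of a line on
whose direction the form does not vanish. -/
lemma card_mul_card_filter_eq_zero_le [Fintype E] (hg : g ∈ powerForms K E k) {v : E}
    (hv : g v ≠ 0) : Fintype.card K * #{u | g u = 0} ≤ Fintype.card E * k := by
  calc Fintype.card K * #{u | g u = 0} = ∑ t : K, #{u | g (u + t • v) = 0} := by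
        rw [← card_univ, ← smul_eq_mul, ← sum_const]
        refine sum_congr rfl fun t _ => ?_
        simp only [card_filter]
        exact (Equiv.sum_comp (Equiv.addRight (t • v)) fun u => if g u = 0 then 1 else 0).symm
    _ = ∑ u : E, #{t : K | g (u + t • v) = 0} := by
        simp only [card_filter]
        exact sum_comm
    _ ≤ Fintype.card E * k := by
        rw [← card_univ, ← smul_eq_mul]
        exact sum_le_card_nsmul _ _ _ fun u _ => card_filter_line_eq_zero_le hg hv u

end PowerForms

section Rigidity

open Finset Polynomial
open scoped Classical

variable {ι K : Type*} [Field K]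

lemma sum_eval_eq_eval_zero {Z : Finset K} {n : ℕ} (h0 : (#Z : K) = 1)
    (h : ∀ k ≠ 0, k ≤ n → ∑ z ∈ Z, z ^ k = 0) {φ : K[X]} (hφ : φ.natDegree ≤ n) :
    ∑ z ∈ Z, φ.eval z = φ.eval 0 := by
  simp only [eval_eq_sum_range' (Nat.lt_succ_of_le hφ)]
  rw [sum_comm]
  refine sum_congr rfl fun k hk => ?_
  rw [← mul_sum]
  congr 1
  rcases eq_or_ne k 0 with rfl | hk0
  · simp [h0]
  · rw [h k hk0 (Nat.lt_succ_iff.1 (mem_range.1 hk)), zero_pow hk0]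

/-- Test the hypothesis on the polynomial vanishing at all nodes but `i`. -/
lemma prod_erase_sub_eq {Z : Finset ι} {g : ι → K} {w : K}
    (h : ∀ φ : K[X], φ.natDegree < #Z → ∑ z ∈ Z, φ.eval (g z) = φ.eval w) {i : ι} (hi : i ∈ Z) :
    ∏ j ∈ Z.erase i, (g i - g j) = ∏ j ∈ Z.erase i, (w - g j) := by
  have hdeg : (∏ j ∈ Z.erase i, (X - C (g j))).natDegree < #Z := by
    rw [natDegree_finsetProd_X_sub_C_eq_card, card_erase_of_mem hi]
    exact Nat.sub_lt (card_pos.2 ⟨i, hi⟩) one_pos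
  have := h _ hdeg
  rw [sum_eq_single_of_mem i hi fun b hb hbi => by
    rw [eval_prod]
    exact prod_eq_zero (mem_erase.2 ⟨hbi, hb⟩) (by simp)] at this
  simpa only [eval_prod, eval_sub, eval_X, eval_C] using this

lemma ne_of_sum_eval_eq {Z : Finset ι} {g : ι → K} {w : K} (hg : Set.InjOn g Z) (hZ : 1 < #Z)
    (h : ∀ φ : K[X], φ.natDegree < #Z → ∑ z ∈ Z, φ.eval (g z) = φ.eval w) :
    ∀ z ∈ Z, w ≠ g z := by
  rintro z hz rfl
  obtain ⟨i, hi, hiz⟩ := exists_mem_ne hZ z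
  have hprod := prod_erase_sub_eq h hi
  rw [prod_eq_zero (f := fun j => g z - g j) (mem_erase.2 ⟨hiz.symm, hz⟩) (sub_self _),
    prod_eq_zero_iff] at hprod
  obtain ⟨j, hj, hij⟩ := hprod
  exact (mem_erase.1 hj).1 (hg (mem_of_mem_erase hj) hi (sub_eq_zero.1 hij).symm)

lemma sub_mul_prod_erase_sub {Z : Finset ι} {g : ι → K} {w : K}
    (h : ∀ φ : K[X], φ.natDegree < #Z → ∑ z ∈ Z, φ.eval (g z) = φ.eval w) {i : ι} (hi : i ∈ Z) :
    (w - g i) * ∏ j ∈ Z.erase i, (g i - g j) = ∏ j ∈ Z, (w - g j) := by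
  rw [prod_erase_sub_eq h hi, mul_prod_erase Z (fun j => w - g j) hi]

lemma prod_erase_inv_sub_inv {Z : Finset K} {y i : K} (hy : y ∉ Z) (hi : i ∈ Z) :
    (∏ j ∈ Z.erase i, ((i - y)⁻¹ - (j - y)⁻¹)) *
        ((i - y) ^ (#Z - 1) * ∏ j ∈ Z.erase i, (j - y)) =
      (-1) ^ (#Z - 1) * ∏ j ∈ Z.erase i, (i - j) := by
  have hne : ∀ j ∈ Z, j - y ≠ 0 := fun j hj => sub_ne_zero.2 (ne_of_mem_of_not_mem hj hy)
  rw [← card_erase_of_mem hi, ← prod_const, ← prod_const, ← prod_mul_distrib, ← prod_mul_distrib,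
    ← prod_mul_distrib]
  refine prod_congr rfl fun j hj => ?_
  have := hne i hi
  have := hne j (mem_of_mem_erase hj)
  field_simp
  ring

/-- Compare the products `∏ (i - j)` obtained from the two quadrature rules. -/
lemma exists_mul_sub_pow_eq {Z : Finset K} {n : ℕ} (hZ : #Z = n + 1) (hn : n ≠ 0) {y w : K}
    (hy : y ∉ Z) (h : ∀ φ : K[X], φ.natDegree ≤ n → ∑ z ∈ Z, φ.eval z = φ.eval 0)
    (h' : ∀ φ : K[X], φ.natDegree ≤ n → ∑ z ∈ Z, φ.eval (z - y)⁻¹ = φ.eval w) :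
    ∃ κ : K, ∀ z ∈ Z, z * (z - y) ^ n = κ * (w * (z - y) - 1) := by
  have hlt : ∀ {m}, m < #Z → m ≤ n := fun hm => by omega
  have hinv : Set.InjOn (fun z => (z - y)⁻¹) Z := fun a _ b _ hab => by simpa using hab
  have hne : ∀ j ∈ Z, j - y ≠ 0 := fun j hj => sub_ne_zero.2 (ne_of_mem_of_not_mem hj hy)
  have hR : ∏ j ∈ Z, (w - (j - y)⁻¹) ≠ 0 := prod_ne_zero_iff.2 fun j hj => sub_ne_zero.2 <|
    ne_of_sum_eval_eq hinv (by omega) (fun φ hφ => h' φ (hlt hφ)) j hj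
  have hQ : ∏ j ∈ Z, (j - y) ≠ 0 := prod_ne_zero_iff.2 hne
  refine ⟨-((-1) ^ n * ∏ j ∈ Z, (0 - j)) /
    ((∏ j ∈ Z, (w - (j - y)⁻¹)) * ∏ j ∈ Z, (j - y)), fun i hi => ?_⟩
  have hp := sub_mul_prod_erase_sub (g := fun z => z) (fun φ hφ => h φ (hlt hφ)) hi
  have hr := sub_mul_prod_erase_sub (g := fun z => (z - y)⁻¹) (fun φ hφ => h' φ (hlt hφ)) hi
  have hpr := prod_erase_inv_sub_inv hy hi
  have hi0 := hne i hi
  rw [← mul_prod_erase Z (fun j => j - y) hi] at hQ ⊢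
  rw [← hr] at hR ⊢
  rw [hZ, Nat.add_sub_cancel] at hpr
  rw [← hp, div_mul_eq_mul_div, eq_div_iff (mul_ne_zero hR hQ)]
  have hinv : w - (i - y)⁻¹ = (w * (i - y) - 1) / (i - y) := by field_simp
  rw [hinv]
  generalize ∏ j ∈ Z.erase i, ((i - y)⁻¹ - (j - y)⁻¹) = R at *
  generalize ∏ j ∈ Z.erase i, (j - y) = Q at *
  generalize ∏ j ∈ Z.erase i, (i - j) = D at *
  field_simp
  linear_combination (i * (w * (i - y) - 1)) * hpr

end Rigidity

section SquareOrder

open Finset Polynomial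

variable {K : Type*} [Field K]

lemma mem_iff_pow_eq_of_card_eq {Z : Finset K} {n : ℕ} (hn : n ≠ 0) (hZ : #Z = n) {c : K}
    (h : ∀ z ∈ Z, z ^ n = c) (z : K) : z ∈ Z ↔ z ^ n = c := by
  classical
  have hmem : ∀ w, w ∈ (nthRoots n c).toFinset ↔ w ^ n = c := fun w => by
    rw [Multiset.mem_toFinset, mem_nthRoots (Nat.pos_of_ne_zero hn)]
  have heq : Z = (nthRoots n c).toFinset := by
    refine eq_of_subset_of_card_le (fun w hw => (hmem w).2 (h w hw)) ?_
    exact (Multiset.toFinset_card_le _).trans ((card_nthRoots n c).trans hZ.ge)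
  rw [heq, hmem]

variable [Fintype K] {q : ℕ}

lemma one_lt_of_card_eq_sq (hK : Fintype.card K = q ^ 2) : 1 < q :=
  (one_lt_pow_iff two_ne_zero).1 (hK ▸ Fintype.one_lt_card (α := K))

lemma exists_ringHom_eq_pow (hK : Fintype.card K = q ^ 2) :
    ∃ σ : K →+* K, ∀ x, σ x = x ^ q := by
  obtain ⟨p, _, n, hp, hn⟩ := FiniteField.card' K
  have : Fact p.Prime := ⟨hp⟩
  obtain ⟨e, -, rfl⟩ := (Nat.dvd_prime_pow hp).1 (hn ▸ hK ▸ dvd_pow_self q two_ne_zero)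
  exact ⟨iterateFrobenius K p e, iterateFrobenius_def p e⟩

lemma pow_pow_eq_self_of_card_eq_sq (hK : Fintype.card K = q ^ 2) (x : K) : (x ^ q) ^ q = x := by
  rw [← pow_mul, ← sq, ← hK, FiniteField.pow_card]

lemma norm_pow_eq_of_card_eq_sq (hK : Fintype.card K = q ^ 2) (x : K) :
    (x ^ (q + 1)) ^ q = x ^ (q + 1) := by
  rw [pow_succ, mul_pow, pow_pow_eq_self_of_card_eq_sq hK, mul_comm]

lemma exists_pow_ne_of_card_eq_sq (hK : Fintype.card K = q ^ 2) : ∃ c : K, c ^ q ≠ c := by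
  have hq := one_lt_of_card_eq_sq hK
  by_contra! hall
  refine FiniteField.X_pow_card_sub_X_ne_zero K hq ?_
  refine eq_zero_of_natDegree_lt_card_of_eval_eq_zero' _ univ (fun c _ => by simp [hall]) ?_
  rw [FiniteField.X_pow_card_sub_X_natDegree_eq K hq, card_univ, hK]
  exact lt_self_pow₀ hq one_lt_two

/-- Raising to the power `q` fixes `z ^ (q + 1)`, so a relation `z ^ (q + 1) = a * z + c` yields a
polynomial of degree at most `q` vanishing on `Z`. -/
lemma eq_zero_and_pow_eq_of_pow_succ_eq_linear (hK : Fintype.card K = q ^ 2) {Z : Finset K}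
    (hZ : #Z = q + 1) {a c : K} (h : ∀ z ∈ Z, z ^ (q + 1) = a * z + c) : a = 0 ∧ c ^ q = c := by
  obtain ⟨σ, hσ⟩ := exists_ringHom_eq_pow hK
  have hq := one_lt_of_card_eq_sq hK
  have heval : ∀ z ∈ Z, (C (a ^ q) * X ^ q - C a * X + C (c ^ q - c)).eval z = 0 := fun z hz => by
    have hfix := norm_pow_eq_of_card_eq_sq hK z
    rw [h z hz, ← hσ, map_add, map_mul, hσ, hσ, hσ] at hfix
    simp only [eval_add, eval_sub, eval_mul, eval_C, eval_X_pow, eval_X]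
    linear_combination hfix
  have hpoly : C (a ^ q) * X ^ q - C a * X + C (c ^ q - c) = 0 := by
    refine eq_zero_of_natDegree_lt_card_of_eval_eq_zero' _ Z heval ?_
    rw [hZ, Nat.lt_succ_iff]
    compute_degree
    omega
  have hlead := congrArg (coeff · q) hpoly
  have hconst := congrArg (eval 0) hpoly
  simp only [coeff_add, coeff_sub, coeff_C_mul, coeff_X_pow_self, coeff_X_of_ne_one hq.ne', mul_one,
    coeff_C_of_ne_zero (by omega : q ≠ 0), mul_zero, sub_zero, add_zero, coeff_zero] at hlead
  simp only [eval_add, eval_sub, eval_mul, eval_C, eval_X_pow, eval_X, zero_pow (by omega : q ≠ 0),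
    mul_zero, sub_zero, zero_add, eval_zero] at hconst
  exact ⟨eq_zero_of_pow_eq_zero hlead, sub_eq_zero.1 hconst⟩

/-- The second rule is the first one seen from the point with parameter `y`, that is, after the
change of coordinate `z ↦ (z - y)⁻¹`. -/
theorem exists_mem_iff_pow_succ_eq (hK : Fintype.card K = q ^ 2) {Z : Finset K} (hZ : #Z = q + 1)
    {y w : K} (hy : y ∉ Z) (h : ∀ φ : K[X], φ.natDegree ≤ q → ∑ z ∈ Z, φ.eval z = φ.eval 0)
    (h' : ∀ φ : K[X], φ.natDegree ≤ q → ∑ z ∈ Z, φ.eval (z - y)⁻¹ = φ.eval w) :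
    ∃ c : K, c ^ q = c ∧ ∀ z, z ∈ Z ↔ z ^ (q + 1) = c := by
  obtain ⟨σ, hσ⟩ := exists_ringHom_eq_pow hK
  have hq := one_lt_of_card_eq_sq hK
  obtain ⟨κ, hκ⟩ := exists_mul_sub_pow_eq hZ (by omega) hy h h'
  have hlin : ∀ z ∈ Z, z ^ (q + 1) = (y ^ q + κ * w) * z + -κ * (w * y + 1) := fun z hz => by
    have := hκ z hz
    rw [← hσ, map_sub, hσ, hσ] at this
    linear_combination this
  obtain ⟨ha, hc⟩ := eq_zero_and_pow_eq_of_pow_succ_eq_linear hK hZ hlin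
  refine ⟨_, hc, mem_iff_pow_eq_of_card_eq q.succ_ne_zero hZ fun z hz => ?_⟩
  rw [hlin z hz, ha, zero_mul, zero_add]

end SquareOrder

section LineParams

open Finset Polynomial
open scoped Classical

variable {F E : Type*} [Field F] [Fintype F] [AddCommGroup E] [Module F E] {A : Finset E}

/-- The parameters `z` of the points `v + z • x` of `A` on the affine line through `v` with
direction `x`. -/
noncomputable def lineParams (F : Type*) {E : Type*} [Field F] [Fintype F] [AddCommGroup E]
    [Module F E] (A : Finset E) (x v : E) : Finset F :=
  {z | v + z • x ∈ A}

lemma mem_lineParams {x v : E} {z : F} : z ∈ lineParams F A x v ↔ v + z • x ∈ A := by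
  simp [lineParams]

lemma card_lineParams {x : E} (hx : x ≠ 0) (v : E) :
    #(lineParams F A x v) = cosetCount A (F ∙ x) v := by
  rw [cosetCount_span_singleton A hx, lineParams]

lemma sum_lineParams_add_smul (A : Finset E) (f : F → F) (x v : E) (t : F) :
    ∑ z ∈ lineParams F A x (v + t • x), f (z + t) = ∑ z ∈ lineParams F A x v, f z := by
  simp only [lineParams, sum_filter, add_assoc, ← add_smul, add_comm t]
  exact Equiv.sum_comp (Equiv.addRight t) fun z => if v + z • x ∈ A then f z else 0

lemma sum_lineParams_swap (hA : ∀ (c : F), ∀ v ∈ A, c • v ∈ A) {x w : E} {y : F} (hx : x ∉ A)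
    (hy : y ∉ lineParams F A x w) (f : F → F) :
    ∑ z ∈ lineParams F A x w, f (z - y)⁻¹ = ∑ z ∈ lineParams F A (w + y • x) x, f z := by
  have hsmul : ∀ ζ : F, ζ ≠ 0 → x + ζ • (w + y • x) = ζ • (w + (ζ⁻¹ + y) • x) := fun ζ hζ => by
    rw [smul_add, smul_add, smul_smul, smul_smul, mul_add, mul_inv_cancel₀ hζ, add_smul, one_smul]
    abel
  have hne : ∀ z ∈ lineParams F A x w, z - y ≠ 0 := fun z hz =>
    sub_ne_zero.2 (ne_of_mem_of_not_mem hz hy)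
  have hne' : ∀ ζ ∈ lineParams F A (w + y • x) x, ζ ≠ 0 := fun ζ hζ h0 => hx (by
    simpa [h0] using mem_lineParams.1 hζ)
  refine sum_nbij' (fun z => (z - y)⁻¹) (fun ζ => ζ⁻¹ + y) (fun z hz => ?_) (fun ζ hζ => ?_)
    (fun z _ => by simp) (fun ζ _ => by simp) (fun z _ => rfl)
  · rw [mem_lineParams, hsmul _ (inv_ne_zero (hne z hz)), inv_inv, sub_add_cancel]
    exact hA _ _ (mem_lineParams.1 hz)
  · rw [mem_lineParams, ← smul_mem_iff_of_cone hA (hne' ζ hζ), ← hsmul ζ (hne' ζ hζ)]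
    exact mem_lineParams.1 hζ

lemma sum_lineParams_pow_mem_powerForms
    (hc : (fun v => if v ∈ A then (1 : F) else 0) ∈ kernelCode F E) (x : E) {k : ℕ}
    (hk : k < Fintype.card F - 1) :
    (fun v => ∑ z ∈ lineParams F A x v, z ^ k) ∈ powerForms F E k := by
  simpa only [lineParams, sum_filter, ite_mul, one_mul, zero_mul] using
    sum_mul_pow_mem_powerForms hc x hk

end LineParams

namespace QuasiHermitianCone

open Finset Polynomial
open scoped Classical

variable {F E : Type*} [Field F] [Fintype F] [AddCommGroup E] [Module F E] [Fintype E]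
  {q : ℕ} {δ : ℤ} {A : Finset E}

lemma card_mul_lt_card_filter_line_eq_one (h : QuasiHermitianCone F q δ A) (hq4 : q ≠ 4)
    (hc : (fun v => if v ∈ A then (1 : F) else 0) ∈ kernelCode F E) {x : E} (hx : x ∉ A) :
    Fintype.card E * (q - 1) < q ^ 2 * #{v | cosetCount A (F ∙ x) v = 1} := by
  set N := #{v | cosetCount A (F ∙ x) v = 1}
  have hq : (1 : ℤ) ≤ q := by exact_mod_cast h.q_pos
  have hsum : ∑ v, (cosetCount A (F ∙ x) v : ℤ) = (q + 1) * Fintype.card E - q * N := by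
    have hval : ∀ v, (cosetCount A (F ∙ x) v : ℤ) =
        (q + 1) - q * if cosetCount A (F ∙ x) v = 1 then 1 else 0 := fun v => by
      split_ifs with h1
      · rw [h1]
        ring
      · rw [(h.cosetCount_line_eq_one_or hq4 hc hx v).resolve_left h1]
        push_cast
        ring
    rw [sum_congr rfl fun v _ => hval v, sum_sub_distrib, ← mul_sum, sum_boole, sum_const,
      card_univ, nsmul_eq_mul, mul_comm (Fintype.card E : ℤ)]
  rw [h.sum_cosetCount_eq, natCard_span_singleton (h.ne_zero_of_notMem hx), h.card_field,
    h.card_space] at hsum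
  have hNeq : (N : ℤ) = q ^ 3 * δ ^ 2 + q ^ 2 * (q - 1) * δ := by
    refine mul_left_cancel₀ (show (q : ℤ) ≠ 0 by linarith) ?_
    push_cast at hsum
    linear_combination hsum
  have hpos : 0 < δ * (δ + (q - 1)) := by
    rcases h.delta_cases with hδ | hδ | hδ
    · exact mul_pos hδ (by linarith)
    · exact mul_pos_of_neg_of_neg (by nlinarith) (by nlinarith)
    · have : (q : ℤ) ≤ q ^ 4 := le_self_pow₀ hq (by norm_num)
      exact mul_pos_of_neg_of_neg (by linarith) (by linarith)
  have : 0 < (q : ℤ) ^ 4 * (δ * (δ + (q - 1))) := by positivity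
  refine (Nat.cast_lt (α := ℤ)).1 ?_
  push_cast [Nat.cast_sub h.q_pos]
  rw [h.card_space, hNeq]
  linarith

lemma sum_lineParams_sub (h : QuasiHermitianCone F q δ A)
    (hc : (fun v => if v ∈ A then (1 : F) else 0) ∈ kernelCode F E) {x : E} (hx : x ∉ A) (v : E)
    (t : F) : ∑ z ∈ lineParams F A x v, z = (∑ z ∈ lineParams F A x (v + t • x), z) + t := by
  rw [← sum_lineParams_add_smul A (fun z => z) x v t, sum_add_distrib, sum_const, nsmul_eq_mul,
    card_lineParams (h.ne_zero_of_notMem hx),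
    cast_cosetCount_line_eq_one h.smul_mem h.zero_mem hc hx, one_mul]

end QuasiHermitianCone

namespace QuasiHermitianCone

open Finset Polynomial
open scoped Classical

variable {F E : Type*} [Field F] [Fintype F] [AddCommGroup E] [Module F E] [Fintype E]
  {q : ℕ} {δ : ℤ} {A : Finset E}

lemma exists_centroid (h : QuasiHermitianCone F q δ A)
    (hc : (fun v => if v ∈ A then (1 : F) else 0) ∈ kernelCode F E) {x : E} (hx : x ∉ A) :
    ∃ T : Dual F E, T x = -1 ∧ ∀ v, T v = ∑ z ∈ lineParams F A x v, z := by
  have hlt : 1 < Fintype.card F - 1 := by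
    rw [h.card_field]
    have : 2 ^ 2 ≤ q ^ 2 := Nat.pow_le_pow_left (one_lt_of_card_eq_sq h.card_field) 2
    omega
  have hmem := sum_lineParams_pow_mem_powerForms hc x hlt
  simp only [pow_one] at hmem
  obtain ⟨T, hT⟩ := exists_dual_eq_of_mem_powerForms_one hmem
  refine ⟨T, ?_, hT⟩
  have hshift := h.sum_lineParams_sub hc hx 0 1
  rw [← hT, ← hT, zero_add, one_smul, map_zero] at hshift
  linear_combination -hshift

lemma sum_lineParams_pow_eq_zero_of_lt (h : QuasiHermitianCone F q δ A) (hq4 : q ≠ 4)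
    (hc : (fun v => if v ∈ A then (1 : F) else 0) ∈ kernelCode F E) {x : E} (hx : x ∉ A)
    {T : Dual F E} (hTx : T x = -1) (hT : ∀ v, T v = ∑ z ∈ lineParams F A x v, z) {w : E}
    (hw : T w = 0) {k : ℕ} (hk0 : k ≠ 0) (hk : k < q) : ∑ z ∈ lineParams F A x w, z ^ k = 0 := by
  have hx0 := h.ne_zero_of_notMem hx
  let π : E →ₗ[F] E := LinearMap.id + T.smulRight x
  have hπ : ∀ v, π v = v + T v • x := fun v => rfl
  have hg := comp_mem_powerForms (sum_lineParams_pow_mem_powerForms hc x (k := k) (by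
    rw [h.card_field]
    have : q < q ^ 2 := lt_self_pow₀ (by omega) one_lt_two
    omega)) π
  by_contra hne
  have hbound := card_mul_card_filter_eq_zero_le hg (v := w) (by
    simpa only [hπ, hw, zero_smul, add_zero] using hne)
  have hsub : #{v | cosetCount A (F ∙ x) v = 1} ≤
      #{v | ∑ z ∈ lineParams F A x (π v), z ^ k = 0} := by
    refine card_le_card fun v hv => ?_
    rw [mem_filter_univ] at hv ⊢
    have hmem : T v • x ∈ F ∙ x := Submodule.smul_mem _ _ (Submodule.mem_span_singleton_self x)
    rw [← cosetCount_add_of_mem A hmem, ← hπ, ← card_lineParams hx0, card_eq_one] at hv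
    obtain ⟨a, ha⟩ := hv
    have hTπ := hT (π v)
    rw [ha, sum_singleton, hπ, map_add, map_smul, hTx, smul_eq_mul] at hTπ
    rw [ha, sum_singleton, ← hTπ, mul_neg_one, add_neg_cancel, zero_pow hk0]
  have hmany := h.card_mul_lt_card_filter_line_eq_one hq4 hc hx
  rw [h.card_field] at hbound
  have := hmany.trans_le ((Nat.mul_le_mul_left _ hsub).trans hbound)
  have := Nat.lt_of_mul_lt_mul_left this
  omega

/-- The moments of order below `q` vanish by Schwartz-Zippel, and the one of order `q` is the
conjugate of the first. -/
theorem sum_eval_lineParams (h : QuasiHermitianCone F q δ A) (hq4 : q ≠ 4)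
    (hc : (fun v => if v ∈ A then (1 : F) else 0) ∈ kernelCode F E) {x : E} (hx : x ∉ A)
    {T : Dual F E} (hTx : T x = -1) (hT : ∀ v, T v = ∑ z ∈ lineParams F A x v, z) (v : E)
    {φ : F[X]} (hφ : φ.natDegree ≤ q) :
    ∑ z ∈ lineParams F A x v, φ.eval z = φ.eval (T v) := by
  obtain ⟨σ, hσ⟩ := exists_ringHom_eq_pow h.card_field
  set w := v + T v • x with hw
  have hTw : T w = 0 := by
    rw [hw, map_add, map_smul, hTx, smul_eq_mul, mul_neg_one, add_neg_cancel]
  have hcard : (#(lineParams F A x w) : F) = 1 := by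
    rw [card_lineParams (h.ne_zero_of_notMem hx),
      cast_cosetCount_line_eq_one h.smul_mem h.zero_mem hc hx]
  have hmoment : ∀ k ≠ 0, k ≤ q → ∑ z ∈ lineParams F A x w, z ^ k = 0 := fun k hk0 hk => by
    rcases hk.lt_or_eq with hk | rfl
    · exact h.sum_lineParams_pow_eq_zero_of_lt hq4 hc hx hTx hT hTw hk0 hk
    · simp only [← hσ]
      rw [← map_sum, ← hT, hTw, map_zero]
  have hdeg : (φ.comp (X + C (T v))).natDegree ≤ q := by
    rwa [natDegree_comp, natDegree_X_add_C, mul_one]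
  have := sum_eval_eq_eval_zero hcard hmoment hdeg
  simp only [eval_comp, eval_add, eval_X, eval_C, zero_add] at this
  rw [← this, sum_lineParams_add_smul A (fun z => φ.eval z)]

/-- A line meeting `A` in more than one point is seen from two points outside `A`: along the line
itself and, after the inversion `z ↦ (z - y)⁻¹`, from one of its points. -/
theorem exists_mem_iff_pow_succ_eq (h : QuasiHermitianCone F q δ A) (hq4 : q ≠ 4)
    (hc : (fun v => if v ∈ A then (1 : F) else 0) ∈ kernelCode F E) {x : E} (hx : x ∉ A)
    {T : Dual F E} (hTx : T x = -1) (hT : ∀ v, T v = ∑ z ∈ lineParams F A x v, z) {w : E}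
    (hw : T w = 0) :
    ∃ c : F, c ^ q = c ∧ ∀ z, z ∈ lineParams F A x w ↔ z ^ (q + 1) = c := by
  have hq := one_lt_of_card_eq_sq h.card_field
  have hcard := card_lineParams (F := F) (A := A) (h.ne_zero_of_notMem hx) w
  rcases h.cosetCount_line_eq_one_or hq4 hc hx w with h1 | h1
  · obtain ⟨a, ha⟩ := card_eq_one.1 (hcard.trans h1)
    have ha0 : a = 0 := by rw [← hw, hT, ha, sum_singleton]
    exact ⟨0, zero_pow (by omega), fun z => by
      rw [ha, ha0, mem_singleton, pow_eq_zero_iff q.succ_ne_zero]⟩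
  · have hZ := hcard.trans h1
    obtain ⟨y, hy⟩ : ∃ y, y ∉ lineParams F A x w := by
      by_contra! hall
      have : Fintype.card F ≤ q + 1 := hZ ▸ card_le_card fun z _ => hall z
      rw [h.card_field] at this
      nlinarith
    have hyA : w + y • x ∉ A := fun hA => hy (mem_lineParams.2 hA)
    obtain ⟨T', hT'x, hT'⟩ := h.exists_centroid hc hyA
    refine _root_.exists_mem_iff_pow_succ_eq h.card_field hZ hy (w := T' x)
      (fun φ hφ => ?_) fun φ hφ => ?_
    · rw [h.sum_eval_lineParams hq4 hc hx hTx hT w hφ, hw]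
    · rw [sum_lineParams_swap h.smul_mem hx hy fun z => φ.eval z,
        h.sum_eval_lineParams hq4 hc hyA hT'x hT' x hφ]

theorem exists_hermitian_equation (h : QuasiHermitianCone F q δ A) (hq : 2 < q) (hq4 : q ≠ 4)
    (hc : (fun v => if v ∈ A then (1 : F) else 0) ∈ kernelCode F E) {x : E} (hx : x ∉ A) :
    ∃ H ∈ powerForms F E (q + 1), (∀ v, v ∈ A ↔ H v = 0) ∧ ∀ v, H v ^ q = H v := by
  have hx0 := h.ne_zero_of_notMem hx
  obtain ⟨σ, hσ⟩ := exists_ringHom_eq_pow h.card_field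
  obtain ⟨T, hTx, hT⟩ := h.exists_centroid hc hx
  let π : E →ₗ[F] E := LinearMap.id + T.smulRight x
  have hπ : ∀ v, π v = v + T v • x := fun v => rfl
  have hTπ : ∀ v, T (π v) = 0 := fun v => by
    rw [hπ, map_add, map_smul, hTx, smul_eq_mul, mul_neg_one, add_neg_cancel]
  have hS := comp_mem_powerForms (sum_lineParams_pow_mem_powerForms hc x (k := q + 1) (by
    rw [h.card_field, Nat.lt_sub_iff_add_lt]
    nlinarith)) π
  have key : ∀ v, (v ∈ A ↔ (-T v) ^ (q + 1) = ∑ z ∈ lineParams F A x (π v), z ^ (q + 1)) ∧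
      (∑ z ∈ lineParams F A x (π v), z ^ (q + 1)) ^ q =
        ∑ z ∈ lineParams F A x (π v), z ^ (q + 1) := fun v => by
    obtain ⟨c, hcq, hmem⟩ := h.exists_mem_iff_pow_succ_eq hq4 hc hx hTx hT (hTπ v)
    have hsum : ∑ z ∈ lineParams F A x (π v), z ^ (q + 1) = c := by
      rw [sum_congr rfl fun z hz => (hmem z).1 hz, sum_const, nsmul_eq_mul, card_lineParams hx0,
        cast_cosetCount_line_eq_one h.smul_mem h.zero_mem hc hx, one_mul]
    rw [hsum, ← hmem, mem_lineParams, hπ, neg_smul, add_neg_cancel_right]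
    exact ⟨Iff.rfl, hcq⟩
  refine ⟨_, Submodule.sub_mem _ (pow_mem_powerForms (-T) (q + 1)) hS, fun v => ?_, fun v => ?_⟩
  · exact (key v).1.trans sub_eq_zero.symm
  · change ((-T v) ^ (q + 1) - ∑ z ∈ lineParams F A x (π v), z ^ (q + 1)) ^ q =
      (-T v) ^ (q + 1) - ∑ z ∈ lineParams F A x (π v), z ^ (q + 1)
    rw [← hσ, map_sub, hσ, hσ, norm_pow_eq_of_card_eq_sq h.card_field, (key v).2]

end QuasiHermitianCone

section HermitianForms

open Finset

variable {K E : Type*} [Field K] [AddCommGroup E] [Module K E] {σ : K →+* K}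

lemma exists_sesquilinear_of_mem_powerForms {q : ℕ} (hσ : ∀ x, σ x = x ^ q) {g : E → K}
    (hg : g ∈ powerForms K E (q + 1)) : ∃ B : E →ₛₗ[σ] E →ₗ[K] K, ∀ v, B v v = g v := by
  induction hg using Submodule.span_induction with
  | mem g h =>
    obtain ⟨L, rfl⟩ := h
    refine ⟨(LinearMap.toSpanSingleton K (Dual K E) L).comp (σ.toSemilinearMap.comp L), fun v => ?_⟩
    simp [hσ, pow_succ]
  | zero => exact ⟨0, fun v => rfl⟩
  | add g g' _ _ hg hg' =>
    obtain ⟨B, hB⟩ := hg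
    obtain ⟨B', hB'⟩ := hg'
    exact ⟨B + B', fun v => congrArg₂ (· + ·) (hB v) (hB' v)⟩
  | smul a g _ hg =>
    obtain ⟨B, hB⟩ := hg
    exact ⟨a • B, fun v => congrArg (a • ·) (hB v)⟩

/-- Polarization: compare the expansions of `B (c • u + v) (c • u + v)` for `c = 1` and for a `c`
that is not fixed by `σ`. -/
lemma isSymm_of_apply_self_fixed (hσ : ∀ x, σ (σ x) = x) (hne : ∃ c, σ c ≠ c)
    {B : E →ₛₗ[σ] E →ₗ[K] K} (hB : ∀ v, σ (B v v) = B v v) : B.IsSymm := by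
  refine ⟨fun u v => ?_⟩
  obtain ⟨c, hc⟩ := hne
  have hcross : ∀ c, c * σ (B u v) + σ c * σ (B v u) = σ c * B u v + c * B v u := fun c => by
    have := hB (c • u + v)
    simp only [map_add, LinearMap.add_apply, map_smul, LinearMap.map_smulₛₗ, LinearMap.smul_apply,
      smul_eq_mul, map_mul, hσ, hB] at this
    linear_combination this
  have hone := hcross 1
  rw [map_one] at hone
  refine sub_eq_zero.1 ((mul_eq_zero.1 ?_).resolve_left (sub_ne_zero.2 hc))
  linear_combination σ c * hone - hcross c

lemma sum_sum_mul_apply_single_eq {ι : Type*} [Fintype ι] [DecidableEq ι]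
    (B : (ι → K) →ₛₗ[σ] (ι → K) →ₗ[K] K) (x y : ι → K) :
    ∑ i, ∑ j, x i * B (Pi.single j 1) (Pi.single i 1) * σ (y j) = B y x := by
  conv_rhs => rw [pi_eq_sum_univ' x, pi_eq_sum_univ' y]
  simp only [map_sum, LinearMap.sum_apply, map_smul, LinearMap.map_smulₛₗ, LinearMap.smul_apply,
    smul_eq_mul, mul_sum, mul_assoc, mul_comm (σ _)]

end HermitianForms

namespace QuasiHermitianCone

open Finset
open scoped Classical

variable {F E : Type*} [Field F] [Fintype F] [AddCommGroup E] [Module F E] [Fintype E]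
  {q : ℕ} {δ : ℤ} {A : Finset E}

lemma eq_zero_of_add_smul_mem_iff (h : QuasiHermitianCone F q δ A) (hq : 2 < q) {x : E}
    (hx : ∀ v (c : F), v + c • x ∈ A ↔ v ∈ A) : x = 0 := by
  refine (Module.forall_dual_apply_eq_zero_iff F x).1 fun L => by_contra fun hL => ?_
  have hbias : formBias A id L = 0 := by
    rw [formBias, sub_eq_zero, Nat.cast_inj]
    have hLinv : ∀ v (c : F), L (v + (c * (L x)⁻¹) • x) = L v + c := fun v c => by
      rw [map_add, map_smul, smul_eq_mul, inv_mul_cancel_right₀ hL]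
    refine card_nbij' (fun v => v + ((1 : F) * (L x)⁻¹) • x) (fun v => v + ((-1 : F) * (L x)⁻¹) • x)
      ?_ ?_ ?_ ?_
    · intro v hv
      simp only [id, coe_filter, Set.mem_ofPred_eq, hx, hLinv] at hv ⊢
      exact ⟨hv.1, by rw [hv.2, zero_add]⟩
    · intro v hv
      simp only [id, coe_filter, Set.mem_ofPred_eq, hx, hLinv] at hv ⊢
      exact ⟨hv.1, by rw [hv.2, add_neg_cancel]⟩
    all_goals
      intro v _
      module
  have hδ := h.delta_ne_zero
  have hq0 : (q : ℤ) ≠ 0 := by exact_mod_cast h.q_pos.ne'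
  have hq1 : (q : ℤ) - 1 ≠ 0 := by omega
  rcases h.formBias_eq L (fun h0 => hL (by rw [h0, LinearMap.zero_apply])) with hL' | hL'
  · exact mul_ne_zero hq0 hδ (hL'.symm.trans hbias)
  · exact neg_ne_zero.2 (mul_ne_zero (mul_ne_zero hq0 hq1) hδ) (hL'.symm.trans hbias)

lemma exists_notMem (h : QuasiHermitianCone F q δ A) : ∃ x, x ∉ A := by
  by_contra! hall
  have hcard : (#A : ℤ) = Fintype.card E := by rw [eq_univ_of_forall hall, card_univ]
  have hq : (2 : ℤ) ≤ q := by exact_mod_cast one_lt_of_card_eq_sq h.card_field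
  have hδ := h.delta_ne_zero
  rw [h.card_eq, h.card_space] at hcard
  have hfactor : q * (q - 1) * δ * (q ^ 2 * δ + 1) = 0 := by linear_combination -hcard
  have hunit : (q : ℤ) ^ 2 * δ + 1 = 0 := (mul_eq_zero.1 hfactor).resolve_left <|
    mul_ne_zero (mul_ne_zero (by omega) (by omega)) hδ
  rcases hδ.lt_or_gt with hneg | hpos
  · nlinarith
  · nlinarith

/-- The form is non-degenerate because a vector in its radical would be a period of `A`. -/
theorem exists_hermitian_matrix {ι : Type*} [Fintype ι] [DecidableEq ι] {A : Finset (ι → F)}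
    (h : QuasiHermitianCone F q δ A) (hq : 2 < q) (hq4 : q ≠ 4)
    (hc : (fun v => if v ∈ A then (1 : F) else 0) ∈ kernelCode F (ι → F)) :
    ∃ M : Matrix ι ι F, IsUnit M.det ∧ Mᵀ = M.map (fun a => a ^ q) ∧
      ∀ x, x ∈ A ↔ ∑ i, ∑ j, x i * M i j * x j ^ q = 0 := by
  obtain ⟨x, hx⟩ := h.exists_notMem
  obtain ⟨σ, hσ⟩ := exists_ringHom_eq_pow h.card_field
  obtain ⟨H, hH, hAH, hHq⟩ := h.exists_hermitian_equation hq hq4 (by convert hc) hx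
  obtain ⟨B, hB⟩ := exists_sesquilinear_of_mem_powerForms hσ hH
  have hsymm : B.IsSymm := isSymm_of_apply_self_fixed
    (fun x => by rw [hσ, hσ, pow_pow_eq_self_of_card_eq_sq h.card_field])
    (by simpa only [hσ] using exists_pow_ne_of_card_eq_sq h.card_field)
    fun v => by rw [hB, hσ, hHq]
  have hsum := sum_sum_mul_apply_single_eq B
  simp only [hσ] at hsum
  refine ⟨fun i j => B (Pi.single j 1) (Pi.single i 1), ?_, ?_, fun v => ?_⟩
  · refine isUnit_iff_ne_zero.2 fun hdet => ?_
    obtain ⟨R, hR0, hR⟩ := Matrix.exists_vecMul_eq_zero_iff.2 hdet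
    have hBR : ∀ v, B v R = 0 := fun v => by
      rw [← hsum R v, sum_comm]
      refine sum_eq_zero fun j _ => ?_
      rw [← sum_mul]
      exact mul_eq_zero_of_left (congrFun hR j) _
    have hRB : ∀ v, B R v = 0 := fun v => hsymm.eq_iff.1 (hBR v)
    refine hR0 (h.eq_zero_of_add_smul_mem_iff hq fun v c => ?_)
    rw [hAH, hAH, ← hB, ← hB]
    simp [hBR, hRB]
  · ext i j
    exact (hsymm.eq (Pi.single j 1) (Pi.single i 1)).symm.trans (hσ _)
  · rw [hAH, hsum, hB]

end QuasiHermitianCone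

section HermitianCode

open Finset
open scoped Classical

variable {K E : Type*} [Field K] [AddCommGroup E] [Module K E]

lemma diag_mem_mul {X : Type*} [Finite X] {P Q : Submodule K (X → K)} {G : X → X → K}
    (hP : ∀ w, (fun u => G u w) ∈ P) (hQ : ∀ u, G u ∈ Q) : (fun u => G u u) ∈ P * Q := by
  have := Fintype.ofFinite X
  obtain ⟨π, hπ⟩ := P.subtype.exists_leftInverse_of_injective P.ker_subtype
  have hdiag : (fun u => G u u) = ∑ x, (π (Pi.single x 1) : X → K) * G x := by
    ext u
    have hproj : (fun y => G y u) = π fun y => G y u :=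
      (congrArg Subtype.val (LinearMap.congr_fun hπ ⟨_, hP u⟩)).symm
    have happly := congrFun hproj u
    rw [pi_eq_sum_univ' fun y => G y u] at happly
    rw [Finset.sum_apply]
    simpa [mul_comm] using happly
  rw [hdiag]
  exact Submodule.sum_mem _ fun x _ => Submodule.mul_mem_mul (π _).2 (hQ x)

variable [Fintype K]

lemma pow_mul_pow_eq_sum {j l : ℕ} (hl : l ≠ 0) (hjl : j + l = Fintype.card K - 1)
    (a b : K) : a ^ j * b ^ l = ∑ t : K, (-t) ^ j * if a + t * b = 0 then 1 else 0 := by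
  rcases eq_or_ne b 0 with rfl | hb
  · simp only [mul_zero, add_zero, ← sum_mul]
    have hneg : ∑ t : K, (-t) ^ j = ∑ t : K, t ^ j := Equiv.sum_comp (Equiv.neg K) (· ^ j)
    rw [hneg, FiniteField.sum_pow_lt_card_sub_one K j (by omega), zero_pow hl, mul_zero, zero_mul]
  · have hroot : ∀ t, a + t * b = 0 ↔ t = -(a / b) := fun t => by
      rw [← neg_div, eq_div_iff hb, eq_neg_iff_add_eq_zero, add_comm]
    have hpow : b ^ j * b ^ l = 1 := by
      rw [← pow_add, hjl, FiniteField.pow_card_sub_one_eq_one b hb]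
    simp only [hroot, mul_ite, mul_one, mul_zero, sum_ite_eq', mem_univ, if_true, neg_neg, div_pow]
    rw [eq_div_iff (pow_ne_zero j hb)]
    linear_combination a ^ j * hpow

lemma powerForms_mul_powerForms_le_kernelCode {j l : ℕ} (hl : l ≠ 0)
    (hjl : j + l = Fintype.card K - 1) : powerForms K E j * powerForms K E l ≤ kernelCode K E := by
  rw [powerForms, powerForms, Submodule.span_mul_span, Submodule.span_le]
  rintro _ ⟨_, ⟨L, rfl⟩, _, ⟨L', rfl⟩, rfl⟩
  have hsum : ((fun v => L v ^ j) * fun v => L' v ^ l) =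
      ∑ t : K, (-t) ^ j • fun v => if (L + t • L') v = 0 then (1 : K) else 0 := by
    ext v
    simpa using pow_mul_pow_eq_sum hl hjl (L v) (L' v)
  change ((fun v => L v ^ j) * fun v => L' v ^ l) ∈ kernelCode K E
  rw [hsum]
  exact Submodule.sum_mem _ fun t _ => Submodule.smul_mem _ _ (ite_ker_mem_kernelCode _)

/-- `B v u ^ (q - 1)` is a `(q - 1)`-th power of a linear form in `u` and a `q * (q - 1)`-th power
of a linear form in `v`, and these degrees add up to `q ^ 2 - 1`. -/
theorem ite_apply_self_mem_kernelCode [Finite E] {q : ℕ} (hK : Fintype.card K = q ^ 2)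
    {σ : K →+* K} (hσ : ∀ x, σ x = x ^ q) {B : E →ₛₗ[σ] E →ₗ[K] K} (hB : B.IsSymm) :
    (fun v => if B v v = 0 then (1 : K) else 0) ∈ kernelCode K E := by
  have hq := one_lt_of_card_eq_sq hK
  have hpow : (fun v => B v v ^ (q - 1)) ∈ kernelCode K E := by
    refine powerForms_mul_powerForms_le_kernelCode (j := q - 1) (l := q * (q - 1))
      (mul_ne_zero (by omega) (by omega)) ?_ <| diag_mem_mul (G := fun u v => B v u ^ (q - 1))
        (fun v => pow_mem_powerForms (B v) _) fun u => ?_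
    · obtain ⟨k, rfl⟩ : ∃ k, q = k + 1 := ⟨q - 1, by omega⟩
      rw [hK, Nat.add_sub_cancel]
      exact (Nat.sub_eq_of_eq_add (by ring)).symm
    · have hflip : ∀ v, B v u ^ (q - 1) = B u v ^ (q * (q - 1)) := fun v => by
        rw [← hB.eq u v, hσ, ← pow_mul]
      simpa only [hflip] using pow_mem_powerForms (B u) _
  have hone : (fun _ => 1 : E → K) ∈ kernelCode K E := by
    simpa using ite_ker_mem_kernelCode (0 : Dual K E)
  have hind : ∀ v, (if B v v = 0 then (1 : K) else 0) = 1 - B v v ^ (q - 1) := fun v => by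
    split_ifs with h0
    · rw [h0, zero_pow (by omega), sub_zero]
    · have hfix : B v v ^ (q - 1) * B v v = 1 * B v v := by
        rw [← pow_succ, Nat.sub_add_cancel hq.le, ← hσ, hB.eq, one_mul]
      rw [mul_right_cancel₀ h0 hfix, sub_self]
  simp only [hind]
  exact Submodule.sub_mem _ hone hpow

end HermitianCode

section HermitianMatrices

open Finset

variable {K ι : Type*} [Field K] [Fintype ι] {σ : K →+* K}

lemma exists_isSymm_of_hermitian_matrix (hσ : ∀ x, σ (σ x) = x) {M : Matrix ι ι K}
    (hM : Mᵀ = M.map σ) : ∃ B : (ι → K) →ₛₗ[σ] (ι → K) →ₗ[K] K, B.IsSymm ∧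
      ∀ x, B x x = ∑ i, ∑ j, x i * M i j * σ (x j) := by
  classical
  let B := Matrix.toLinearMapₛₗ₂' K σ (RingHom.id K) Mᵀ
  have hB : ∀ x y, B x y = ∑ i, ∑ j, σ (x i) * (y j * M j i) :=
    Matrix.toLinearMapₛₗ₂'_apply σ (RingHom.id K) Mᵀ
  refine ⟨B, ⟨fun x y => ?_⟩, fun x => ?_⟩
  · have hMσ : ∀ i j, σ (M i j) = M j i := fun i j => (congrFun (congrFun hM i) j).symm
    simp only [hB, map_sum, map_mul, hσ, hMσ]
    rw [sum_comm]
    exact sum_congr rfl fun i _ => sum_congr rfl fun j _ => by ring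
  · rw [hB, sum_comm]
    exact sum_congr rfl fun i _ => sum_congr rfl fun j _ => by ring

end HermitianMatrices

section ProjectivePoints

open Finset
open scoped Classical

variable {F : Type} [Field F] {n : ℕ}

/-- The projective point with homogeneous coordinates `v`. -/
def ProjPoint.mk (v : Fin n → F) (hv : v ≠ 0) : ProjPoint F n :=
  ⟨Submodule.span F {v}, finrank_span_singleton hv⟩

namespace ProjPoint

lemma eq_mk_of_mem {P : ProjPoint F n} {v : Fin n → F} (hv : v ≠ 0) (h : v ∈ P.1) :
    P = mk v hv :=
  Subtype.ext <| Eq.symm <| Submodule.eq_of_le_of_finrank_eq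
    ((Submodule.span_singleton_le_iff_mem v P.1).2 h) ((finrank_span_singleton hv).trans P.2.symm)

lemma mk_smul {v : Fin n → F} {c : F} (hcv : c • v ≠ 0) :
    mk (c • v) hcv = mk v (smul_ne_zero_iff.1 hcv).2 :=
  (eq_mk_of_mem hcv (Submodule.smul_mem _ c (Submodule.mem_span_singleton_self v))).symm

lemma mk_mem_pointsIn {v : Fin n → F} (hv : v ≠ 0) {W : Submodule F (Fin n → F)} :
    mk v hv ∈ pointsIn F n W ↔ v ∈ W :=
  Submodule.span_singleton_le_iff_mem v W

lemma exists_eq_mk (P : ProjPoint F n) : ∃ v, ∃ hv : v ≠ 0, P = mk v hv := by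
  obtain ⟨⟨v, hvP⟩, hv, -⟩ := finrank_eq_one_iff'.1 P.2
  exact ⟨v, fun h => hv (Subtype.ext h), eq_mk_of_mem _ hvP⟩

/-- A choice of homogeneous coordinates for the point `P`. -/
noncomputable def rep (P : ProjPoint F n) : Fin n → F :=
  (exists_eq_mk P).choose

lemma rep_ne_zero (P : ProjPoint F n) : P.rep ≠ 0 :=
  (exists_eq_mk P).choose_spec.choose

lemma mk_rep (P : ProjPoint F n) : mk P.rep P.rep_ne_zero = P :=
  (exists_eq_mk P).choose_spec.choose_spec.symm

lemma exists_smul_rep_eq {v : Fin n → F} (hv : v ≠ 0) : ∃ c : F, c • (mk v hv).rep = v := by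
  refine Submodule.mem_span_singleton.1 (?_ : v ∈ (mk _ (rep_ne_zero _)).1)
  rw [mk_rep]
  exact Submodule.mem_span_singleton_self v

variable [Fintype F]

noncomputable instance : Fintype (ProjPoint F n) :=
  have : Finite (ProjPoint F n) :=
    inferInstanceAs (Finite {W : Submodule F (Fin n → F) // finrank F W = 1})
  Fintype.ofFinite _

/-- The cone over a set `V` of projective points: all the vectors representing the points of `V`,
together with the zero vector. -/
noncomputable def cone (V : Set (ProjPoint F n)) : Finset (Fin n → F) :=
  {v | ∀ hv : v ≠ 0, mk v hv ∈ V}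

lemma mem_cone {V : Set (ProjPoint F n)} {v : Fin n → F} :
    v ∈ cone V ↔ ∀ hv : v ≠ 0, mk v hv ∈ V := by
  simp [cone]

lemma mem_cone_of_ne_zero {V : Set (ProjPoint F n)} {v : Fin n → F} (hv : v ≠ 0) :
    v ∈ cone V ↔ mk v hv ∈ V :=
  mem_cone.trans (forall_prop_of_true hv)

lemma zero_mem_cone (V : Set (ProjPoint F n)) : 0 ∈ cone V :=
  mem_cone.2 fun h => absurd rfl h

lemma rep_mem_cone {V : Set (ProjPoint F n)} {P : ProjPoint F n} : P.rep ∈ cone V ↔ P ∈ V := by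
  rw [mem_cone_of_ne_zero P.rep_ne_zero, mk_rep]

lemma cone_injective : Function.Injective (cone : Set (ProjPoint F n) → Finset (Fin n → F)) :=
  fun V V' h => Set.ext fun P => by rw [← rep_mem_cone, h, rep_mem_cone]

lemma smul_mem_cone {V : Set (ProjPoint F n)} (c : F) {v : Fin n → F} (hv : v ∈ cone V) :
    c • v ∈ cone V :=
  mem_cone.2 fun hcv => mk_smul hcv ▸ mem_cone.1 hv _

lemma mem_cone_pointsIn {W : Submodule F (Fin n → F)} {v : Fin n → F} :
    v ∈ cone (pointsIn F n W) ↔ v ∈ W := by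
  rcases eq_or_ne v 0 with rfl | hv
  · simp only [zero_mem_cone, Submodule.zero_mem]
  · rw [mem_cone_of_ne_zero hv, mk_mem_pointsIn]

lemma mem_cone_inter {V V' : Set (ProjPoint F n)} {v : Fin n → F} :
    v ∈ cone (V ∩ V') ↔ v ∈ cone V ∧ v ∈ cone V' := by
  simp only [mem_cone, Set.mem_inter_iff, forall_and]

lemma card_cone (V : Set (ProjPoint F n)) : #(cone V) = 1 + V.ncard * (Fintype.card F - 1) := by
  have hnonzero : #(V.toFinset ×ˢ univ.erase (0 : F)) = #((cone V).erase 0) := by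
    refine card_bij (fun x _ => x.2 • x.1.rep) ?_ ?_ ?_
    · rintro ⟨P, c⟩ h
      simp only [mem_product, Set.mem_toFinset, mem_erase] at h
      exact mem_erase.2 ⟨smul_ne_zero h.2.1 P.rep_ne_zero, smul_mem_cone c (rep_mem_cone.2 h.1)⟩
    · rintro ⟨P, c⟩ h ⟨P', c'⟩ - heq
      simp only [mem_product, mem_erase] at h heq
      have hne := smul_ne_zero h.2.1 P.rep_ne_zero
      have hP : P = P' := by
        rw [← mk_rep P, ← mk_rep P', ← mk_smul hne, ← mk_smul (heq ▸ hne : c' • P'.rep ≠ 0)]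
        simp only [heq]
      subst hP
      rw [smul_left_injective F P.rep_ne_zero heq]
    · intro v hv
      obtain ⟨hv0, hvV⟩ := mem_erase.1 hv
      obtain ⟨c, hc⟩ := exists_smul_rep_eq hv0
      refine ⟨(mk v hv0, c), ?_, hc⟩
      simp only [mem_product, Set.mem_toFinset, mem_erase, mem_univ, and_true]
      exact ⟨(mem_cone_of_ne_zero hv0).1 hvV, fun h0 => hv0 (by rw [← hc, h0, zero_smul])⟩
  rw [← card_erase_add_one (zero_mem_cone V), ← hnonzero, card_product,
    card_erase_of_mem (mem_univ _), card_univ, ← Set.ncard_eq_toFinset_card', add_comm]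

lemma natCast_ncard_eq (V : Set (ProjPoint F n)) : (V.ncard : F) = 1 - #(cone V) := by
  rw [card_cone, Nat.cast_add, Nat.cast_mul, Nat.cast_sub Fintype.card_pos,
    FiniteField.cast_card_eq_zero]
  push_cast
  ring

lemma card_filter_cone_eq_secant (V : Set (ProjPoint F n)) (L : Dual F (Fin n → F)) :
    #{v ∈ cone V | L v = 0} = 1 + secant F n V L.ker * (Fintype.card F - 1) := by
  rw [secant, ← card_cone]
  congr 1
  ext v
  rw [mem_filter, mem_cone_inter, mem_cone_pointsIn, LinearMap.mem_ker]

end ProjPoint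

end ProjectivePoints

section HermitianCones

variable {F : Type} [Field F] [Fintype F] {q n : ℕ}

open ProjPoint

lemma mem_cone_hermSet {M : Matrix (Fin n) (Fin n) F} {x : Fin n → F} :
    x ∈ cone (hermSet F q n M) ↔ ∑ i, ∑ j, x i * M i j * x j ^ q = 0 := by
  have hsmul : ∀ c : F, ∑ i, ∑ j, (c • x) i * M i j * (c • x) j ^ q =
      c ^ (q + 1) * ∑ i, ∑ j, x i * M i j * x j ^ q := fun c => by
    simp only [Finset.mul_sum, Pi.smul_apply, smul_eq_mul]
    exact Finset.sum_congr rfl fun i _ => Finset.sum_congr rfl fun j _ => by ring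
  rcases eq_or_ne x 0 with rfl | hx
  · simp [zero_mem_cone]
  · rw [mem_cone_of_ne_zero hx]
    refine ⟨fun h => h x (Submodule.mem_span_singleton_self x), fun h y hy => ?_⟩
    obtain ⟨c, rfl⟩ := Submodule.mem_span_singleton.1 hy
    rw [hsmul, h, mul_zero]

lemma isNonsingHermitian_iff_cone {V : Set (ProjPoint F n)} :
    IsNonsingHermitian F q n V ↔ ∃ M : Matrix (Fin n) (Fin n) F, IsUnit M.det ∧
      Mᵀ = M.map (fun a => a ^ q) ∧ ∀ x, x ∈ cone V ↔ ∑ i, ∑ j, x i * M i j * x j ^ q = 0 := by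
  refine exists_congr fun M => and_congr_right' (and_congr_right' ?_)
  rw [← cone_injective.eq_iff, Finset.ext_iff]
  exact forall_congr' fun x => by rw [mem_cone_hermSet]

end HermitianCones

section QuasiHermitianCones

open Finset ProjPoint
open scoped Classical

lemma card_sub_one_mul_formBias {K E : Type*} [Field K] [Fintype K] [AddCommGroup E] [Module K E]
    {A : Finset E} (hA : ∀ (c : K), ∀ v ∈ A, c • v ∈ A) (L : Dual K E) :
    ((Fintype.card K : ℤ) - 1) * formBias A id L =
      Fintype.card K * #{v ∈ A | L v = 0} - #A := by
  have hfib : #A = #{v ∈ A | L v = 0} + (Fintype.card K - 1) * #{v ∈ A | L v = 1} := by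
    rw [card_eq_sum_card_fiberwise (f := L) (t := univ) fun _ _ => mem_coe.2 (mem_univ _),
      ← add_sum_erase _ _ (mem_univ 0), sum_congr rfl fun c hc =>
        card_filter_eq_of_ne_zero hA L (ne_of_mem_erase hc),
      sum_const, card_erase_of_mem (mem_univ _), card_univ, smul_eq_mul]
  rw [hfib]
  push_cast [Fintype.card_pos, formBias, id]
  ring

theorem IsQuasiHermitian.quasiHermitianCone {F : Type} [Field F] [Fintype F] {q r : ℕ}
    (hF : Fintype.card F = q ^ 2) (hr : 2 ≤ r) {V : Set (ProjPoint F (r + 1))}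
    (hV : IsQuasiHermitian F q r V) : QuasiHermitianCone F q (-(-q) ^ (r - 1)) (cone V) := by
  obtain ⟨k, rfl⟩ := Nat.exists_eq_add_of_le' hr
  have hq := one_lt_of_card_eq_sq hF
  have hsub : ((Fintype.card F - 1 : ℕ) : ℤ) = q ^ 2 - 1 := by
    rw [Nat.cast_sub Fintype.card_pos, hF, Nat.cast_pow, Nat.cast_one]
  have hsign : (-1 : ℤ) ^ k * (-1) ^ k = 1 := by rw [← mul_pow]; norm_num
  have hδ : -(-q : ℤ) ^ (k + 2 - 1) = (-1) ^ k * q ^ (k + 1) := by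
    rw [neg_pow, Nat.add_sub_assoc one_le_two, pow_succ]
    ring
  have hcard : (#(cone V) : ℤ) = q ^ 3 * ((-1) ^ k * q ^ (k + 1)) ^ 2 -
      (-1) ^ k * q ^ (k + 1) * q * (q - 1) := by
    rw [card_cone, Nat.cast_add, Nat.cast_mul, hsub, hV.1]
    push_cast
    linear_combination (-1 - (q : ℤ) ^ 3 * (q ^ (k + 1)) ^ 2) * hsign
  refine ⟨hF, ?_, ⟨_, by omega, rfl⟩, zero_mem_cone V, fun c _ => smul_mem_cone c, ?_, ?_⟩
  · rw [hδ, Fintype.card_fun, Fintype.card_fin, hF]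
    push_cast
    linear_combination -(q : ℤ) ^ 4 * (q ^ (k + 1)) ^ 2 * hsign
  · rw [hδ, hcard]
  · intro L hL
    have hker := Dual.finrank_ker_add_one_of_ne_zero hL
    rw [finrank_fin_fun, Nat.add_right_cancel_iff] at hker
    have hbias := card_sub_one_mul_formBias (fun c _ => smul_mem_cone (V := V) c) L
    rw [card_filter_cone_eq_secant, hcard, Nat.cast_add, Nat.cast_mul, hsub, hF, Nat.cast_pow]
      at hbias
    have hne : (q : ℤ) ^ 2 - 1 ≠ 0 := by
      have : (1 : ℤ) < q := by exact_mod_cast hq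
      nlinarith
    rw [hδ]
    refine (hV.2 L.ker hker).imp (fun h => ?_) fun h => ?_ <;>
      refine mul_left_cancel₀ hne (hbias.trans ?_) <;> rw [h]
    · rw [show k + 2 - 1 = k + 1 from rfl]
      linear_combination (-(q : ℤ) ^ 2 - (q : ℤ) ^ 3 * (q ^ (k + 1)) ^ 2) * hsign
    · rw [show k + 2 - 1 = k + 1 from rfl, Nat.add_sub_cancel]
      linear_combination (-(q : ℤ) ^ 4 - (q : ℤ) ^ 3 * (q ^ (k + 1)) ^ 2) * hsign

end QuasiHermitianCones

section ScalarDescent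

lemma mem_span_of_algebraMap_comp_mem_span {k K X : Type*} [Field k] [Ring K] [Nontrivial K]
    [Algebra k K] {S : Set (X → k)} {c : X → k}
    (hc : algebraMap k K ∘ c ∈ Submodule.span K ((algebraMap k K ∘ ·) '' S)) :
    c ∈ Submodule.span k S := by
  have hcomp : ∀ f ∈ Submodule.span K ((algebraMap k K ∘ ·) '' S), ∀ φ : K →ₗ[k] k,
      φ ∘ f ∈ Submodule.span k S := fun f hf => by
    induction hf using Submodule.span_induction with
    | mem f hf =>
      obtain ⟨s, hs, rfl⟩ := hf
      intro φ
      have hsmul : φ ∘ algebraMap k K ∘ s = φ 1 • s := by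
        ext x
        simp [Algebra.algebraMap_eq_smul_one, mul_comm]
      exact hsmul ▸ Submodule.smul_mem _ _ (Submodule.subset_span hs)
    | zero => exact fun φ => by simp
    | add f f' _ _ hf hf' =>
      intro φ
      have hadd : φ ∘ (f + f') = φ ∘ f + φ ∘ f' := funext fun x => map_add φ _ _
      exact hadd ▸ Submodule.add_mem _ (hf φ) (hf' φ)
    | smul a _ _ hf => exact fun φ => hf (φ ∘ₗ LinearMap.mulLeft k a)
  obtain ⟨π, hπ⟩ := (Algebra.linearMap k K).exists_leftInverse_of_injective
    (LinearMap.ker_eq_bot.2 (algebraMap k K).injective)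
  convert hcomp _ hc π
  ext x
  exact (LinearMap.congr_fun hπ (c x)).symm

end ScalarDescent

section HyperplaneCode

open Finset ProjPoint
open scoped Classical

lemma natCast_card_filter_eq_zero {K E : Type*} [Field K] [Finite K] [AddCommGroup E]
    [Module K E] [Fintype E] (hE : 1 < finrank K E) (L : Dual K E) :
    (#{v | L v = 0} : K) = 0 := by
  have := Fintype.ofFinite K
  have hker : finrank K L.ker ≠ 0 := by
    have := L.finrank_range_add_finrank_ker
    have := (Submodule.finrank_le L.range).trans_eq (finrank_self K)
    omega
  have hcard : #{v | L v = 0} = Fintype.card K ^ finrank K L.ker := by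
    rw [← card_eq_pow_finrank, Fintype.card_subtype]
    simp only [LinearMap.mem_ker]
  rw [hcard, Nat.cast_pow, FiniteField.cast_card_eq_zero, zero_pow hker]

variable {F : Type} [Field F] {p n : ℕ}

lemma finrank_eq_sub_one_iff_exists_ker (hn : n ≠ 0) {H : Submodule F (Fin n → F)} :
    finrank F H = n - 1 ↔ ∃ L : Dual F (Fin n → F), L ≠ 0 ∧ H = L.ker := by
  have hker : ∀ L : Dual F (Fin n → F), L ≠ 0 → finrank F L.ker = n - 1 := fun L hL =>
    (Nat.eq_sub_of_add_eq (Dual.finrank_ker_add_one_of_ne_zero hL)).trans (by rw [finrank_fin_fun])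
  refine ⟨fun hH => ?_, fun ⟨L, hL, h⟩ => h ▸ hker L hL⟩
  have hlt : H < ⊤ := lt_top_iff_ne_top.2 fun htop => by
    rw [htop, finrank_top, finrank_fin_fun] at hH
    omega
  obtain ⟨L, hL, hle⟩ := Submodule.exists_le_ker_of_lt_top H hlt
  exact ⟨L, hL, Submodule.eq_of_le_of_finrank_eq hle (hH.trans (hker L hL).symm)⟩

lemma sum_dual_ite_eq_zero [Finite F] (hn : 2 ≤ n) [Fintype (Dual F (Fin n → F))]
    (v : Fin n → F) : ∑ L : Dual F (Fin n → F), (if L v = 0 then (1 : F) else 0) = 0 := by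
  have := Fintype.ofFinite F
  rw [sum_boole]
  exact natCast_card_filter_eq_zero
    (by rwa [Subspace.dual_finrank_eq, finrank_fin_fun]) (Dual.eval F (Fin n → F) v)

lemma charVec_apply (S : Set (ProjPoint F n)) (P : ProjPoint F n) :
    charVec F p n S P = if P ∈ S then 1 else 0 := by
  rw [charVec, Set.indicator_apply, Pi.one_apply]

variable [Fintype F] [Algebra (ZMod p) F]

/-- The extension of a word indexed by projective points to a word indexed by vectors. The value at
the zero vector is chosen so that hyperplanes are sent to their cones. -/
noncomputable def vectorLift (F : Type) [Field F] [Fintype F] (p n : ℕ) [Algebra (ZMod p) F] :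
    (ProjPoint F n → ZMod p) →ₗ[ZMod p] ((Fin n → F) → F) where
  toFun c v := algebraMap _ F (if hv : v ≠ 0 then c (mk v hv) else ∑ P, c P)
  map_add' c d := by
    ext v
    by_cases hv : v = 0 <;> simp [hv, sum_add_distrib]
  map_smul' a c := by
    ext v
    by_cases hv : v = 0 <;> simp [hv, Algebra.smul_def, mul_sum]

lemma vectorLift_rep (c : ProjPoint F n → ZMod p) (P : ProjPoint F n) :
    vectorLift F p n c P.rep = algebraMap _ F (c P) := by
  simp [vectorLift, P.rep_ne_zero, mk_rep]

lemma vectorLift_charVec {V : Set (ProjPoint F n)} (hV : (V.ncard : F) = 1) :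
    vectorLift F p n (charVec F p n V) = fun v => if v ∈ cone V then 1 else 0 := by
  ext v
  rcases eq_or_ne v 0 with rfl | hv
  · have hsum : ∑ P, charVec F p n V P = V.ncard := by
      simp only [charVec_apply, sum_boole]
      rw [Set.ncard_eq_toFinset_card', Set.filter_mem_univ_eq_toFinset]
    simp [vectorLift, zero_mem_cone, hsum, hV]
  · simp [vectorLift, hv, charVec_apply, mem_cone_of_ne_zero hv]

lemma vectorLift_charVec_ker (hn : 2 ≤ n) (L : Dual F (Fin n → F)) :
    vectorLift F p n (charVec F p n (pointsIn F n L.ker)) = fun v => if L v = 0 then 1 else 0 := by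
  have hcone : cone (pointsIn F n L.ker) = ({v | L v = 0} : Finset (Fin n → F)) := by
    ext v
    simp [mem_cone_pointsIn]
  rw [vectorLift_charVec]
  · simp [hcone]
  · rw [natCast_ncard_eq, hcone, natCast_card_filter_eq_zero (by rwa [finrank_fin_fun]), sub_zero]

lemma vectorLift_mem_kernelCode (hn : 2 ≤ n) {c : ProjPoint F n → ZMod p}
    (hc : c ∈ hypCode F p n) : vectorLift F p n c ∈ kernelCode F (Fin n → F) := by
  refine (Submodule.span_le (p := ((kernelCode F _).restrictScalars (ZMod p)).comap _)).2 ?_ hc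
  rintro _ ⟨H, hH, rfl⟩
  obtain ⟨L, -, rfl⟩ := (finrank_eq_sub_one_iff_exists_ker (by omega)).1 hH
  change vectorLift F p n _ ∈ kernelCode F _
  rw [vectorLift_charVec_ker hn]
  exact ite_ker_mem_kernelCode L

lemma comp_rep_mem_span (hn : 2 ≤ n) {g : (Fin n → F) → F} (hg : g ∈ kernelCode F (Fin n → F)) :
    g ∘ rep ∈ Submodule.span F ((algebraMap (ZMod p) F ∘ ·) ''
      {c | ∃ H : Submodule F (Fin n → F), finrank F H = n - 1 ∧
        c = charVec F p n (pointsIn F n H)}) := by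
  have : Finite (Dual F (Fin n → F)) := Module.finite_of_finite F
  have := Fintype.ofFinite (Dual F (Fin n → F))
  set S : Submodule F (ProjPoint F n → F) := Submodule.span F _
  let χ (L : Dual F (Fin n → F)) (P : ProjPoint F n) : F := if L P.rep = 0 then 1 else 0
  have hne : ∀ L ≠ 0, χ L ∈ S := fun L hL => by
    refine Submodule.subset_span ⟨_, ⟨L.ker,
      (finrank_eq_sub_one_iff_exists_ker (by omega)).2 ⟨L, hL, rfl⟩, rfl⟩, ?_⟩
    ext P
    change algebraMap (ZMod p) F _ = _
    rw [← vectorLift_rep, vectorLift_charVec_ker hn]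
  have hzero : χ 0 ∈ S := by
    have hsum : χ 0 + ∑ L ∈ univ.erase 0, χ L = 0 := by
      rw [add_sum_erase _ _ (mem_univ 0)]
      ext P
      simpa [χ] using sum_dual_ite_eq_zero hn P.rep
    rw [eq_neg_of_add_eq_zero_left hsum]
    exact Submodule.neg_mem _ (Submodule.sum_mem _ fun L hL => hne L (ne_of_mem_erase hL))
  refine (Submodule.span_le (p := S.comap (LinearMap.funLeft F F rep))).2 ?_ hg
  rintro _ ⟨L, rfl⟩
  rcases eq_or_ne L 0 with rfl | hL
  · exact hzero
  · exact hne L hL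

lemma charVec_mem_hypCode_iff (hp : p.Prime) (hn : 2 ≤ n) {V : Set (ProjPoint F n)}
    (hV : (V.ncard : F) = 1) : charVec F p n V ∈ hypCode F p n ↔
      (fun v => if v ∈ cone V then (1 : F) else 0) ∈ kernelCode F (Fin n → F) := by
  have : Fact p.Prime := ⟨hp⟩
  rw [← vectorLift_charVec (p := p) hV]
  refine ⟨vectorLift_mem_kernelCode hn, fun h => ?_⟩
  have hrep : vectorLift F p n (charVec F p n V) ∘ rep =
      algebraMap (ZMod p) F ∘ charVec F p n V := funext fun P => vectorLift_rep _ P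
  exact mem_span_of_algebraMap_comp_mem_span (hrep ▸ comp_rep_mem_span hn h)

end HyperplaneCode

lemma IsQuasiHermitian.natCast_ncard {F : Type} [Field F] [Fintype F] {q r : ℕ}
    (hF : Fintype.card F = q ^ 2) (hr : r ≠ 0) {V : Set (ProjPoint F (r + 1))}
    (hV : IsQuasiHermitian F q r V) : (V.ncard : F) = 1 := by
  have hq : (q : F) = 0 := by
    have := FiniteField.cast_card_eq_zero F
    rw [hF, Nat.cast_pow] at this
    exact eq_zero_of_pow_eq_zero this
  have hsign : (-1 : F) ^ r * (-1) ^ r = 1 := by rw [← mul_pow]; norm_num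
  have hcard := congrArg (Int.cast (R := F)) hV.1
  push_cast at hcard
  rw [hq, zero_pow two_ne_zero, zero_pow r.succ_ne_zero, zero_pow hr] at hcard
  linear_combination hsign - hcard

theorem stmt0_general (p h q r : ℕ) (hp : p.Prime) (hq : q = p ^ h) (hr : 2 ≤ r) (hq2 : 2 < q)
    (hq4 : q ≠ 4) (F : Type) [Field F] [Fintype F] (hF : Fintype.card F = q ^ 2)
    (V : Set (ProjPoint F (r + 1))) (hV : IsQuasiHermitian F q r V) :
    IsNonsingHermitian F q (r + 1) V ↔ charVec F p (r + 1) V ∈ hypCode F p (r + 1) := by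
  classical
  have : Fact p.Prime := ⟨hp⟩
  have : CharP F p := charP_of_card_eq_prime_pow (f := h * 2) (by rw [hF, hq, ← pow_mul])
  let := ZMod.algebra F p
  rw [charVec_mem_hypCode_iff hp (by omega) (hV.natCast_ncard hF (by omega)),
    isNonsingHermitian_iff_cone]
  constructor
  · rintro ⟨M, -, hM, hVM⟩
    obtain ⟨σ, hσ⟩ := exists_ringHom_eq_pow hF
    have hσσ : ∀ x, σ (σ x) = x := fun x => by rw [hσ, hσ, pow_pow_eq_self_of_card_eq_sq hF]
    have hMσ : Mᵀ = M.map σ := by rw [hM, funext hσ]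
    obtain ⟨B, hB, hBM⟩ := exists_isSymm_of_hermitian_matrix hσσ hMσ
    convert ite_apply_self_mem_kernelCode hF hσ hB using 4 with v
    rw [hVM, hBM]
    simp only [hσ]
  · exact (hV.quasiHermitianCone hF hr).exists_hermitian_matrix hq2 hq4

/-- Main theorem: under the stated conditions on `r` and `q = p^h`,
a quasi-Hermitian variety of PG(r, q²) is a non-singular Hermitian variety iff its
characteristic vector lies in the `F_p`-code spanned by the hyperplanes. -/
theorem stmt0 (p h q r : ℕ) (hp : p.Prime) (hq : q = p ^ h)
    (hcase : (r = 3 ∧ 4 < q) ∨ (4 ≤ r ∧ q = p ∧ 4 < p) ∨ (4 ≤ r ∧ q = p ^ 2 ∧ 3 < p))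
    (F : Type) [Field F] [Fintype F] (hF : Fintype.card F = q ^ 2)
    (V : Set (ProjPoint F (r + 1))) (hV : IsQuasiHermitian F q r V) :
    IsNonsingHermitian F q (r + 1) V ↔ charVec F p (r + 1) V ∈ hypCode F p (r + 1) := by
  have hr : 3 ≤ r := by omega
  have hq4 : 4 < q := by rcases hcase with h | h | ⟨-, rfl, h⟩ <;> [omega; omega; nlinarith]
  exact stmt0_general p h q r hp hq (by omega) (by omega) hq4.ne' F hF V hV
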